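/- Let r ≥ 2 and let H be a 3-partite 3-graph with vertex classes A, B, C such that |A| = n, and let ε ≥ 0. Suppose every vertex of A has degree at least r and every vertex of B ∪ C has degree at most r. If ν(H) ≤ (1 + ε)·n/2, then H contains at least (1 − (72r² − 150r + 77)ε)·n/2 pairwise disjoint subhypergraphs each isomorphic to (r/2)·F, where F is the truncated Fano plane. -/

import Mathlib

namespace Tripartite

/-- The degree of a vertex `a` in the first class of a 3-partite 3-multihypergraph,
whose edges are given as a multiset of triples (so parallel edges are allowed). -/
def deg1 {α β γ : Type*} [DecidableEq α] (H : Multiset (α × β × γ)) (a : α) : ℕ :=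
  (H.filter fun e => e.1 = a).card

/-- The degree of a vertex `b` in the second class. -/
def deg2 {α β γ : Type*} [DecidableEq β] (H : Multiset (α × β × γ)) (b : β) : ℕ :=
  (H.filter fun e => e.2.1 = b).card

/-- The degree of a vertex `c` in the third class. -/
def deg3 {α β γ : Type*} [DecidableEq γ] (H : Multiset (α × β × γ)) (c : γ) : ℕ :=
  (H.filter fun e => e.2.2 = c).card

/-- `H` is `r`-regular: every vertex of every class has degree exactly `r`. -/
def IsRegular {α β γ : Type*} [DecidableEq α] [DecidableEq β] [DecidableEq γ]
    (H : Multiset (α × β × γ)) (r : ℕ) : Prop :=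
  (∀ a, deg1 H a = r) ∧ (∀ b, deg2 H b = r) ∧ (∀ c, deg3 H c = r)

/-- A matching of `H`: a set of edges of `H` that are pairwise disjoint. -/
def IsMatching {α β γ : Type*} (H : Multiset (α × β × γ)) (M : Finset (α × β × γ)) : Prop :=
  (∀ e ∈ M, e ∈ H) ∧
  ∀ e ∈ M, ∀ f ∈ M, e ≠ f → e.1 ≠ f.1 ∧ e.2.1 ≠ f.2.1 ∧ e.2.2 ≠ f.2.2

/-- The matching number ν(H): the maximum size of a matching of `H`. -/
noncomputable def matchNum {α β γ : Type*} (H : Multiset (α × β × γ)) : ℕ :=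
  sSup {k | ∃ M : Finset (α × β × γ), IsMatching H M ∧ M.card = k}

/-- The edge multiset of the truncated Fano plane `F` on vertices `x1, y1` (first class),
`x2, y2` (second class), `x3, y3` (third class). -/
def fanoEdges {α β γ : Type*} (x1 y1 : α) (x2 y2 : β) (x3 y3 : γ) :
    Multiset (α × β × γ) :=
  {(x1, x2, x3), (x1, y2, y3), (y1, x2, y3), (y1, y2, x3)}

/-- The six vertices `x1, y1, x2, y2, x3, y3` span a copy of `s • F` in `H`, i.e. a
subhypergraph in which every edge of the truncated Fano plane appears with
multiplicity (at least) `s`. -/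
def IsFanoCopy {α β γ : Type*} (H : Multiset (α × β × γ)) (s : ℕ)
    (x1 y1 : α) (x2 y2 : β) (x3 y3 : γ) : Prop :=
  x1 ≠ y1 ∧ x2 ≠ y2 ∧ x3 ≠ y3 ∧ s • fanoEdges x1 y1 x2 y2 x3 y3 ≤ H

/-- The six vertices `x1, y1, x2, y2, x3, y3` span a connected component of `H` that is a
copy of `s • F`: the multiset of edges of `H` meeting one of these six vertices is exactly
`s` parallel copies of each of the four edges of the truncated Fano plane. -/
def IsFanoComponent {α β γ : Type*} [DecidableEq α] [DecidableEq β] [DecidableEq γ]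
    (H : Multiset (α × β × γ)) (s : ℕ)
    (x1 y1 : α) (x2 y2 : β) (x3 y3 : γ) : Prop :=
  x1 ≠ y1 ∧ x2 ≠ y2 ∧ x3 ≠ y3 ∧
  H.filter (fun e => e.1 = x1 ∨ e.1 = y1 ∨ e.2.1 = x2 ∨ e.2.1 = y2 ∨
      e.2.2 = x3 ∨ e.2.2 = y3)
    = s • fanoEdges x1 y1 x2 y2 x3 y3

/-!
View `H` as a bipartite multigraph on `β` and `γ` whose edges are labelled by `α`, so that a
matching of `H` is a rainbow matching, and trim `H` so that every label occurs exactly `r` times.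
The topological Hall theorem yields a set `S` of labels whose edges span a multigraph `G` such that
the complex of matchings of `G` has acyclicity level at most `#S - n + ν(H)`, where `ν(H)` is about
`n / 2`. Conversely, removing edges and taking links one at a time bounds that level from below by
a weight depending on the number `r * #S` of edges of `G`, its matching number, which is at least
`#S` by Kőnig's theorem, and the number of its components that are `r`-regular thickened 4-cycles.
Together the two bounds force `S` to be almost everything and `G` to consist almost entirely of
such 4-cycles.

In a thickened 4-cycle either two disjoint edges carry different labels, or each of the two
diagonals carries a single label and the labelled cycle is `(r/2) • F`. A 4-cycle of the first kind
contains a matching of `H` of size two, while the rest of `H` already supplies a matching with one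
edge for every `2 * r` edges, so a small `ν(H)` leaves room for only few of them.
-/

open Finset

/-! ### Acyclicity of independence complexes -/

section Chains

variable {ι : Type*} [DecidableEq ι]

theorem sum_sum_erase_eq_zero {κ M : Type*} [DecidableEq κ] [AddCommMonoid M]
    (hM : ∀ x : M, x + x = 0) (s : Finset κ) (f : κ → κ → M) (hf : ∀ a b, f a b = f b a) :
    ∑ a ∈ s, ∑ b ∈ s.erase a, f a b = 0 := by
  rw [sum_sigma']
  refine sum_involution (fun x _ => ⟨x.2, x.1⟩) (fun x _ => ?_) ?_ ?_ (fun _ _ => rfl)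
  · rw [hf x.2 x.1]
    exact hM _
  · rintro ⟨a, b⟩ h _ hab
    simp only [Sigma.mk.injEq, heq_eq_eq] at hab
    simp [hab.1] at h
  · rintro ⟨a, b⟩ h
    simp only [mem_sigma, mem_erase] at h ⊢
    exact ⟨h.2.2, h.2.1.symm, h.1⟩

theorem sum_sum_compl_insert [Fintype ι] {M : Type*} [AddCommMonoid M] (f : Finset ι → ι → M) :
    ∑ τ : Finset ι, ∑ v ∈ τᶜ, f (insert v τ) v = ∑ σ : Finset ι, ∑ v ∈ σ, f σ v := by
  rw [sum_sigma', sum_sigma']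
  refine sum_bij' (fun x _ => ⟨insert x.2 x.1, x.2⟩) (fun x _ => ⟨x.1.erase x.2, x.2⟩)
    (by simp) (by simp) ?_ ?_ (by simp)
  · rintro ⟨τ, v⟩ h
    simp only [mem_sigma, mem_univ, mem_compl, true_and] at h
    simp [erase_insert h]
  · rintro ⟨σ, v⟩ h
    simp only [mem_sigma, mem_univ, true_and] at h
    simp [insert_erase h]

/-- The simplicial boundary on chains mod 2, a chain being its function of coefficients. The empty
simplex is included, so that homology is reduced. -/
def boundary [Fintype ι] : (Finset ι → ZMod 2) →+ (Finset ι → ZMod 2) :=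
  AddMonoidHom.mk' (fun z τ => ∑ v ∈ τᶜ, z (insert v τ)) fun z w => by
    funext τ
    simp only [Pi.add_apply, sum_add_distrib]

/-- The part of the chain `z` lying on simplices that avoid `v`. -/
def avoiding (v : ι) (z : Finset ι → ZMod 2) (σ : Finset ι) : ZMod 2 :=
  if v ∈ σ then 0 else z σ

/-- The chain of faces opposite to `v` of the simplices of `z` through `v`. -/
def link (v : ι) (z : Finset ι → ZMod 2) (σ : Finset ι) : ZMod 2 :=
  if v ∈ σ then 0 else z (insert v σ)

/-- The cone with apex `v` over the chain `y`, simplices of `y` through `v` being dropped. -/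
def cone (v : ι) (y : Finset ι → ZMod 2) (σ : Finset ι) : ZMod 2 :=
  if v ∈ σ then y (σ.erase v) else 0

theorem avoiding_add_cone_link (v : ι) (z : Finset ι → ZMod 2) :
    avoiding v z + cone v (link v z) = z := by
  funext σ
  by_cases hv : v ∈ σ <;> simp [avoiding, cone, link, hv]

theorem avoiding_avoiding (v : ι) (z : Finset ι → ZMod 2) :
    avoiding v (avoiding v z) = avoiding v z := by
  funext σ
  by_cases hv : v ∈ σ <;> simp [avoiding, hv]

variable [Fintype ι]

theorem boundary_apply (z : Finset ι → ZMod 2) (τ : Finset ι) :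
    boundary z τ = ∑ v ∈ τᶜ, z (insert v τ) := rfl

theorem boundary_boundary (z : Finset ι → ZMod 2) : boundary (boundary z) = 0 := by
  funext τ
  simp only [boundary_apply, compl_insert]
  exact sum_sum_erase_eq_zero CharTwo.add_self_eq_zero _ (fun v w => z (insert w (insert v τ)))
    fun v w => by rw [insert_comm]

theorem boundary_link (v : ι) (z : Finset ι → ZMod 2) :
    boundary (link v z) = link v (boundary z) := by
  funext τ
  by_cases hv : v ∈ τ
  · simp [boundary_apply, link, hv]
  · rw [boundary_apply, ← add_sum_erase _ _ (mem_compl.2 hv), ← compl_insert]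
    simp only [link, mem_insert_self, if_true, zero_add, hv, if_false, boundary_apply]
    refine sum_congr rfl fun w hw => ?_
    have hvw : v ≠ w := fun h => mem_compl.1 hw (h ▸ mem_insert_self _ _)
    simp [hv, hvw, insert_comm]

theorem boundary_cone {v : ι} {y : Finset ι → ZMod 2} (hy : avoiding v y = y) :
    boundary (cone v y) = y + cone v (boundary y) := by
  have hy0 : ∀ σ, v ∈ σ → y σ = 0 := fun σ hσ => by rw [← hy]; simp [avoiding, hσ]
  funext τ
  by_cases hv : v ∈ τ
  · rw [Pi.add_apply, hy0 τ hv, zero_add, boundary_apply]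
    simp only [cone, hv, mem_insert_of_mem, if_true, boundary_apply]
    rw [compl_erase, sum_insert (by simpa using hv), insert_erase hv, hy0 τ hv, zero_add]
    refine sum_congr rfl fun w hw => ?_
    have hwv : w ≠ v := fun h => mem_compl.1 hw (h ▸ hv)
    rw [erase_insert_of_ne hwv]
  · rw [boundary_apply, sum_eq_single_of_mem v (mem_compl.2 hv)]
    · simp [cone, hv]
    · intro w _ hwv
      simp [cone, hv, hwv.symm]

theorem cone_boundary_avoiding {v : ι} {z : Finset ι → ZMod 2} (hz : boundary z = 0) :
    cone v (boundary (avoiding v z)) = cone v (link v z) := by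
  have hlink : avoiding v (link v z) = link v z := by
    funext σ
    by_cases hv : v ∈ σ <;> simp [avoiding, link, hv]
  have hb : boundary (avoiding v z) + (link v z + cone v (boundary (link v z))) = 0 := by
    rw [← boundary_cone hlink, ← map_add, avoiding_add_cone_link, hz]
  funext σ
  by_cases hv : v ∈ σ
  · have hσ := congrFun hb (σ.erase v)
    simp only [cone, Pi.add_apply, Pi.zero_apply, notMem_erase, if_false, add_zero] at hσ
    simpa only [cone, hv, if_true] using CharTwo.add_eq_zero.1 hσ
  · simp [cone, hv]

end Chains

section Independence

variable {ι : Type*} {L : SimpleGraph ι}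

open Classical in
/-- The vertices of `G` other than `v` that are not adjacent to `v` in `L`. -/
noncomputable def nonNeighbors (L : SimpleGraph ι) (G : Finset ι) (v : ι) : Finset ι :=
  {g ∈ G | g ≠ v ∧ ¬ L.Adj v g}

theorem mem_nonNeighbors {G : Finset ι} {v g : ι} :
    g ∈ nonNeighbors L G v ↔ g ∈ G ∧ g ≠ v ∧ ¬ L.Adj v g := by
  simp [nonNeighbors]

/-- The chain `z` lives on `k`-element subsets of `G` that are independent in `L`, that is, on
simplices of dimension `k - 1` of the independence complex of `L[G]`. -/
def IsIndepChain (L : SimpleGraph ι) (G : Finset ι) (k : ℕ) (z : Finset ι → ZMod 2) : Prop :=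
  ∀ σ, z σ ≠ 0 → σ ⊆ G ∧ L.IsIndepSet σ ∧ #σ = k

theorem IsIndepChain.mono {G G' : Finset ι} {k : ℕ} {z : Finset ι → ZMod 2}
    (h : IsIndepChain L G k z) (hG : G ⊆ G') : IsIndepChain L G' k z :=
  fun σ hσ => ⟨(h σ hσ).1.trans hG, (h σ hσ).2⟩

theorem isIndepChain_zero (G : Finset ι) (k : ℕ) : IsIndepChain L G k 0 :=
  fun _ hσ => absurd rfl hσ

theorem IsIndepChain.sum {κ : Type*} {s : Finset κ} {G : Finset ι} {k : ℕ}
    {z : κ → Finset ι → ZMod 2} (h : ∀ i ∈ s, IsIndepChain L G k (z i)) :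
    IsIndepChain L G k (∑ i ∈ s, z i) := by
  intro σ hσ
  rw [Finset.sum_apply] at hσ
  obtain ⟨i, hi, hne⟩ := exists_ne_zero_of_sum_ne_zero hσ
  exact h i hi σ hne

theorem IsIndepChain.add {G : Finset ι} {k : ℕ} {z w : Finset ι → ZMod 2}
    (hz : IsIndepChain L G k z) (hw : IsIndepChain L G k w) : IsIndepChain L G k (z + w) := by
  intro σ hσ
  by_cases h : z σ = 0
  · exact hw σ (by simpa [h] using hσ)
  · exact hz σ h

variable [DecidableEq ι]

theorem IsIndepChain.avoiding {G : Finset ι} {k : ℕ} {z : Finset ι → ZMod 2}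
    (h : IsIndepChain L G k z) (v : ι) : IsIndepChain L (G.erase v) k (avoiding v z) := by
  intro σ hσ
  simp only [Tripartite.avoiding, ne_eq, ite_eq_left_iff, Classical.not_imp] at hσ
  exact ⟨subset_erase.2 ⟨(h σ hσ.2).1, hσ.1⟩, (h σ hσ.2).2⟩

theorem IsIndepChain.link {G : Finset ι} {k : ℕ} {z : Finset ι → ZMod 2}
    (h : IsIndepChain L G (k + 1) z) (v : ι) :
    IsIndepChain L (nonNeighbors L G v) k (link v z) := by
  intro σ hσ
  simp only [Tripartite.link, ne_eq, ite_eq_left_iff, Classical.not_imp] at hσ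
  obtain ⟨hv, hσ⟩ := hσ
  obtain ⟨hsub, hind, hcard⟩ := h _ hσ
  refine ⟨fun g hg => ?_, hind.mono (by simp), ?_⟩
  · have hgv : g ≠ v := fun h => hv (h ▸ hg)
    exact mem_nonNeighbors.2 ⟨hsub (mem_insert_of_mem hg), hgv,
      hind (by simp) (by simp [hg]) hgv.symm⟩
  · rwa [card_insert_of_notMem hv, Nat.add_right_cancel_iff] at hcard

theorem IsIndepChain.link_eq_zero {G : Finset ι} {z : Finset ι → ZMod 2}
    (h : IsIndepChain L G 0 z) (v : ι) : Tripartite.link v z = 0 := by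
  funext σ
  by_contra hσ
  simp only [Tripartite.link, Pi.zero_apply, ite_eq_left_iff, Classical.not_imp] at hσ
  exact insert_ne_empty v σ (card_eq_zero.1 (h _ hσ.2).2.2)

theorem IsIndepChain.cone {G : Finset ι} {k : ℕ} {y : Finset ι → ZMod 2} {v : ι}
    (h : IsIndepChain L (nonNeighbors L G v) k y) (hv : v ∈ G) :
    IsIndepChain L G (k + 1) (cone v y) := by
  intro σ hσ
  simp only [Tripartite.cone, ne_eq, ite_eq_right_iff, Classical.not_imp] at hσ
  obtain ⟨hvσ, hσ⟩ := hσ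
  obtain ⟨hsub, hind, hcard⟩ := h _ hσ
  rw [← insert_erase hvσ]
  refine ⟨insert_subset hv fun g hg => (mem_nonNeighbors.1 (hsub hg)).1, ?_, ?_⟩
  · rw [coe_insert]
    refine hind.insert fun g hg _ => ?_
    have hadj := (mem_nonNeighbors.1 (hsub hg)).2.2
    exact ⟨hadj, fun h => hadj h.symm⟩
  · rw [card_insert_of_notMem (notMem_erase v σ), hcard]

theorem IsIndepChain.avoiding_eq_self {G : Finset ι} {k : ℕ} {y : Finset ι → ZMod 2} {v : ι}
    (h : IsIndepChain L (nonNeighbors L G v) k y) : Tripartite.avoiding v y = y := by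
  funext σ
  by_cases hv : v ∈ σ
  · have hy : y σ = 0 := by
      by_contra hσ
      exact (mem_nonNeighbors.1 ((h σ hσ).1 hv)).2.1 rfl
    simp [Tripartite.avoiding, hy]
  · simp [Tripartite.avoiding, hv]

/-- The reduced homology mod 2 of the independence complex of `L[G]` vanishes in all dimensions
below `k - 1`. -/
def IsAcyclicBelow [Fintype ι] (L : SimpleGraph ι) (G : Finset ι) (k : ℕ) : Prop :=
  ∀ c < k, ∀ z, IsIndepChain L G c z → boundary z = 0 →
    ∃ w, IsIndepChain L G (c + 1) w ∧ boundary w = z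

theorem IsAcyclicBelow.of_isolated [Fintype ι] {G : Finset ι} {e : ι} (he : e ∈ G)
    (hiso : ∀ g ∈ G, ¬ L.Adj e g) (k : ℕ) : IsAcyclicBelow L G k := by
  intro c _ z hz hbz
  have hsub : G.erase e ⊆ nonNeighbors L G e := fun g hg =>
    mem_nonNeighbors.2 ⟨mem_of_mem_erase hg, ne_of_mem_erase hg, hiso g (mem_of_mem_erase hg)⟩
  refine ⟨cone e (avoiding e z), ((hz.avoiding e).mono hsub).cone he, ?_⟩
  rw [boundary_cone (avoiding_avoiding e z), cone_boundary_avoiding hbz, avoiding_add_cone_link]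

theorem IsAcyclicBelow.of_erase [Fintype ι] {G : Finset ι} {v : ι} {k : ℕ} (hv : v ∈ G)
    (hdel : IsAcyclicBelow L (G.erase v) (k + 1))
    (hlink : IsAcyclicBelow L (nonNeighbors L G v) k) : IsAcyclicBelow L G (k + 1) := by
  intro c hc z hz hbz
  obtain ⟨y, hy, hby⟩ : ∃ y, IsIndepChain L (nonNeighbors L G v) c y ∧
      boundary y = link v z := by
    cases c with
    | zero => exact ⟨0, isIndepChain_zero _ _, by rw [hz.link_eq_zero, map_zero]⟩
    | succ c =>
      refine hlink c (by omega) _ (hz.link v) ?_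
      rw [boundary_link, hbz]
      funext σ
      simp [link]
  -- Adding the boundary of the cone over `y` pushes the cycle `z` off `v`.
  have hpush : z + boundary (cone v y) = avoiding v z + y := by
    have hz' := avoiding_add_cone_link v z
    rw [boundary_cone hy.avoiding_eq_self, hby]
    nth_rewrite 1 [← hz']
    rw [add_add_add_comm, CharTwo.add_self_eq_zero, add_zero]
  have hy' : IsIndepChain L (G.erase v) c y := hy.mono fun g hg =>
    mem_erase.2 ⟨(mem_nonNeighbors.1 hg).2.1, (mem_nonNeighbors.1 hg).1⟩
  obtain ⟨w, hw, hbw⟩ := hdel c hc (z + boundary (cone v y))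
    (hpush ▸ (hz.avoiding v).add hy')
    (by rw [map_add, hbz, boundary_boundary, add_zero])
  refine ⟨w + cone v y, (hw.mono (erase_subset _ _)).add (hy.cone hv), ?_⟩
  rw [map_add, hbw, add_assoc, CharTwo.add_self_eq_zero, add_zero]

/-- A recursive certificate that the independence complex of `L[G]` is acyclic below dimension
`k - 1`: an isolated vertex is a cone point, and a vertex may be deleted at the price of one
dimension in its link. -/
inductive AcyclicCert (L : SimpleGraph ι) : Finset ι → ℕ → Prop
  | zero (G : Finset ι) : AcyclicCert L G 0
  | isolated (G : Finset ι) (e : ι) (k : ℕ) : e ∈ G → (∀ g ∈ G, ¬ L.Adj e g) → AcyclicCert L G k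
  | step (G : Finset ι) (v : ι) (k : ℕ) : v ∈ G → AcyclicCert L (G.erase v) (k + 1) →
      AcyclicCert L (nonNeighbors L G v) k → AcyclicCert L G (k + 1)

namespace AcyclicCert

theorem isAcyclicBelow [Fintype ι] {G : Finset ι} {k : ℕ} (h : AcyclicCert L G k) :
    IsAcyclicBelow L G k := by
  induction h with
  | zero G => exact fun c hc => absurd hc (Nat.not_lt_zero c)
  | isolated G e k he hiso => exact .of_isolated he hiso k
  | step G v k hv _ _ hdel hlink => exact .of_erase hv hdel hlink

theorem mono {G : Finset ι} {k : ℕ} (h : AcyclicCert L G k) : ∀ j ≤ k, AcyclicCert L G j := by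
  induction h with
  | zero G =>
    intro j hj
    rw [Nat.le_zero.1 hj]
    exact zero G
  | isolated G e k he hiso => exact fun j _ => isolated G e j he hiso
  | step G v k hv _ _ hdel hlink =>
    intro j hj
    cases j with
    | zero => exact zero G
    | succ j => exact step G v j hv (hdel _ hj) (hlink _ (by omega))

theorem eq_zero_of_empty {k : ℕ} (h : AcyclicCert L ∅ k) : k = 0 := by
  cases h with
  | zero => rfl
  | isolated _ e _ he _ => simp at he
  | step _ v _ hv _ _ => simp at hv

theorem map {ι' : Type*} [DecidableEq ι'] {L' : SimpleGraph ι'} (j : L ↪g L') {G : Finset ι}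
    {k : ℕ} (h : AcyclicCert L G k) : AcyclicCert L' (G.map j.toEmbedding) k := by
  induction h with
  | zero G => exact zero _
  | isolated G e k he hiso =>
    refine isolated _ (j e) k (mem_map_of_mem _ he) fun g hg => ?_
    obtain ⟨x, hx, rfl⟩ := mem_map.1 hg
    exact fun h => hiso x hx (j.map_adj_iff.1 h)
  | step G v k hv _ _ hdel hlink =>
    refine step _ (j v) k (mem_map_of_mem _ hv) ?_ ?_
    · rwa [map_erase] at hdel
    · convert hlink using 1
      ext x
      simp only [mem_nonNeighbors, mem_map]
      constructor
      · rintro ⟨⟨y, hy, rfl⟩, hne, hadj⟩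
        exact ⟨y, ⟨hy, fun h => hne (congrArg j h), fun h => hadj (j.map_adj_iff.2 h)⟩, rfl⟩
      · rintro ⟨y, ⟨hy, hne, hadj⟩, rfl⟩
        exact ⟨⟨y, hy, rfl⟩, fun h => hne (j.injective h), fun h => hadj (j.map_adj_iff.1 h)⟩

theorem union_clique {W T : Finset ι} {k : ℕ} (h : AcyclicCert L W k) (hT : T.Nonempty)
    (hclique : L.IsClique T) (hWT : ∀ t ∈ T, ∀ w ∈ W, t ≠ w ∧ ¬ L.Adj t w) :
    AcyclicCert L (W ∪ T) (k + 1) := by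
  induction hT using Finset.Nonempty.cons_induction with
  | singleton t =>
    refine isolated _ t _ (by simp) fun g hg => ?_
    rcases mem_union.1 hg with hg | hg
    · exact (hWT t (by simp) g hg).2
    · rw [mem_singleton.1 hg]
      exact L.irrefl
  | cons t T ht _ ih =>
    have htW : t ∉ W := fun h => (hWT t (by simp) t h).1 rfl
    have hdel : (W ∪ cons t T ht).erase t = W ∪ T := by
      rw [cons_eq_insert, union_insert, erase_insert (by simp [htW, ht])]
    have hlink : nonNeighbors L (W ∪ cons t T ht) t = W := by
      ext g
      simp only [mem_nonNeighbors, mem_union, mem_cons]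
      constructor
      · rintro ⟨hg | rfl | hg, hne, hadj⟩
        · exact hg
        · exact absurd rfl hne
        · exact absurd (hclique (by simp) (by simp [hg]) hne.symm) hadj
      · exact fun hg => ⟨Or.inl hg, (hWT t (by simp) g hg).1.symm, (hWT t (by simp) g hg).2⟩
    refine step _ t k (by simp) ?_ (hlink.symm ▸ h)
    rw [hdel]
    exact ih (hclique.subset (coe_subset.2 (subset_cons ht))) fun s hs => hWT s (by simp [hs])

end AcyclicCert

end Independence
/-! ### The topological Hall theorem -/

section Rainbow

variable {ι A : Type*} [DecidableEq ι] [DecidableEq A]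

theorem image_erase_of_apply_eq {f : ι → A} {σ : Finset ι} {v w : ι} (hw : w ∈ σ) (hne : w ≠ v)
    (h : f w = f v) : (σ.erase v).image f = σ.image f := by
  refine (image_subset_image (erase_subset v σ)).antisymm fun x hx => ?_
  obtain ⟨y, hy, rfl⟩ := mem_image.1 hx
  by_cases hyv : y = v
  · exact mem_image.2 ⟨w, mem_erase.2 ⟨hne, hw⟩, by rw [h, hyv]⟩
  · exact mem_image_of_mem f (mem_erase.2 ⟨hyv, hy⟩)

theorem card_filter_image_erase_of_injOn {f : ι → A} {σ : Finset ι} (hf : Set.InjOn f σ) {a : A}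
    (ha : a ∈ σ.image f) : #{v ∈ σ | (σ.erase v).image f = (σ.image f).erase a} = 1 := by
  obtain ⟨v, hv, rfl⟩ := mem_image.1 ha
  rw [card_eq_one]
  refine ⟨v, eq_singleton_iff_unique_mem.2 ⟨mem_filter.2 ⟨hv, ?_⟩, fun w hw => ?_⟩⟩
  · rw [erase_eq, image_sdiff_of_injOn hf (singleton_subset_iff.2 hv), image_singleton, erase_eq]
  · by_contra hwv
    have hmem : f v ∈ (σ.erase w).image f := mem_image_of_mem f (mem_erase.2 ⟨Ne.symm hwv, hv⟩)
    rw [(mem_filter.1 hw).2] at hmem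
    exact notMem_erase _ _ hmem

theorem even_card_filter_image_erase {f : ι → A} {σ : Finset ι} {T : Finset A}
    (hT : #T + 1 = #σ) (hσ : #(σ.image f) < #σ) :
    Even #{v ∈ σ | (σ.erase v).image f = T} := by
  rcases eq_empty_or_nonempty {v ∈ σ | (σ.erase v).image f = T} with h | ⟨v, hv⟩
  · simp [h]
  obtain ⟨hv, hvT⟩ := mem_filter.1 hv
  have hinj : ∀ u ∈ σ, (σ.erase u).image f = T → Set.InjOn f (σ.erase u) := fun u hu h => by
    rw [← card_image_iff, h, card_erase_of_mem hu]
    omega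
  obtain ⟨w, hw, hwv⟩ : ∃ w ∈ σ.erase v, f w = f v := by
    by_contra! h
    refine hσ.ne (card_image_iff.2 ?_)
    rw [← insert_erase hv, coe_insert, Set.injOn_insert (notMem_erase v σ)]
    exact ⟨hinj v hv hvT, fun ⟨w, hw, hwv⟩ => h w hw hwv⟩
  obtain ⟨hne, hwσ⟩ := mem_erase.1 hw
  have hwT : (σ.erase w).image f = T := by
    rw [image_erase_of_apply_eq hv hne.symm hwv.symm, ← image_erase_of_apply_eq hwσ hne hwv, hvT]
  have hpair : {u ∈ σ | (σ.erase u).image f = T} = {v, w} := by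
    ext u
    simp only [mem_filter, mem_insert, mem_singleton]
    constructor
    · rintro ⟨hu, huT⟩
      by_contra! hcon
      exact hne (hinj u hu huT (by simp [hcon.2.symm, hwσ]) (by simp [hcon.1.symm, hv]) hwv)
    · rintro (rfl | rfl)
      exacts [⟨hv, hvT⟩, ⟨hwσ, hwT⟩]
  rw [hpair, card_pair hne.symm]
  exact even_two

-- The door-counting step of Sperner's lemma.
theorem sum_image_erase_eq {f : ι → A} {S : Finset A} {a : A} (ha : a ∈ S)
    {σ : Finset ι} (hσ : σ.image f ⊆ S) (hc : #σ = #S) :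
    (∑ v ∈ σ, if (σ.erase v).image f = S.erase a then (1 : ZMod 2) else 0) =
      if σ.image f = S then 1 else 0 := by
  rw [sum_boole]
  split_ifs with him
  · have hinj : Set.InjOn f σ := by rw [← card_image_iff, him, hc]
    subst him
    rw [card_filter_image_erase_of_injOn hinj ha, Nat.cast_one]
  · refine (ZMod.natCast_eq_zero_iff_even).2 (even_card_filter_image_erase ?_ ?_)
    · rw [card_erase_add_one ha, hc]
    · exact hc ▸ card_lt_card (hσ.ssubset_of_ne him)

variable {L : SimpleGraph ι} {E : Finset ι} {lab : ι → A} [Fintype ι]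

/-- A chain map from the full simplex on `S` to the independence complexes spanned by the vertices
with labels in `S`, up to dimension `k - 1`; `φ S` is the image of the face `S`. -/
structure IsRainbowChainMap (L : SimpleGraph ι) (E : Finset ι) (lab : ι → A) (k : ℕ)
    (φ : Finset A → Finset ι → ZMod 2) : Prop where
  apply_empty : φ ∅ = fun σ => if σ = ∅ then 1 else 0
  isIndepChain : ∀ S, #S ≤ k → IsIndepChain L {e ∈ E | lab e ∈ S} #S (φ S)
  boundary_eq : ∀ S, #S ≤ k → boundary (φ S) = ∑ a ∈ S, φ (S.erase a)

theorem isRainbowChainMap_zero :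
    IsRainbowChainMap L E lab 0 fun _ σ => if σ = ∅ then 1 else 0 where
  apply_empty := rfl
  isIndepChain S hS σ hσ := by
    rw [card_eq_zero.1 (Nat.le_zero.1 hS)]
    simp only [ne_eq, ite_eq_right_iff, one_ne_zero, imp_false, not_not] at hσ
    simp [hσ, SimpleGraph.IsIndepSet]
  boundary_eq S hS := by
    rw [card_eq_zero.1 (Nat.le_zero.1 hS)]
    funext τ
    simp [boundary_apply]

theorem IsRainbowChainMap.exists_filling {k : ℕ} {φ : Finset A → Finset ι → ZMod 2}
    (hφ : IsRainbowChainMap L E lab k φ) {S : Finset A} (hS : #S = k + 1)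
    (hE : IsAcyclicBelow L {e ∈ E | lab e ∈ S} (k + 1)) :
    ∃ w, IsIndepChain L {e ∈ E | lab e ∈ S} (k + 1) w ∧ boundary w = ∑ a ∈ S, φ (S.erase a) := by
  have hcard : ∀ a ∈ S, #(S.erase a) = k := fun a ha => by
    rw [card_erase_of_mem ha, hS, Nat.add_sub_cancel]
  refine hE k k.lt_succ_self _ (.sum fun a ha => ?_) ?_
  · have h := hφ.isIndepChain _ (hcard a ha).le
    rw [hcard a ha] at h
    exact h.mono (monotone_filter_right E fun _ _ he => mem_of_mem_erase he)
  · rw [map_sum, sum_congr rfl fun a ha => hφ.boundary_eq _ (hcard a ha).le]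
    refine sum_sum_erase_eq_zero (fun x => ?_) S (fun a b => φ ((S.erase a).erase b))
      fun a b => by rw [erase_right_comm]
    exact CharTwo.add_self_eq_zero x

theorem exists_isRainbowChainMap
    (hE : ∀ S : Finset A, IsAcyclicBelow L {e ∈ E | lab e ∈ S} #S) (k : ℕ) :
    ∃ φ, IsRainbowChainMap L E lab k φ := by
  induction k with
  | zero => exact ⟨_, isRainbowChainMap_zero⟩
  | succ k ih =>
    obtain ⟨φ, hφ⟩ := ih
    choose! w hw using fun (S : Finset A) (hS : #S = k + 1) =>
      hφ.exists_filling hS (hS ▸ hE S)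
    have hface : ∀ S : Finset A, #S ≤ k + 1 → ∀ a ∈ S,
        (if #(S.erase a) = k + 1 then w (S.erase a) else φ (S.erase a)) = φ (S.erase a) :=
      fun S hS a ha => if_neg (by rw [card_erase_of_mem ha]; omega)
    refine ⟨fun S => if #S = k + 1 then w S else φ S, by simp [hφ.apply_empty], fun S hS => ?_,
      fun S hS => ?_⟩
    · split_ifs with h
      · rw [h]
        exact (hw S h).1
      · exact hφ.isIndepChain S (by omega)
    · rw [sum_congr rfl (hface S hS)]
      split_ifs with h
      · exact (hw S h).2
      · exact hφ.boundary_eq S (by omega)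

theorem IsIndepChain.sum_image_eq {S : Finset A} {z : Finset ι → ZMod 2}
    (hz : IsIndepChain L {e ∈ E | lab e ∈ S} #S z) {a : A} (ha : a ∈ S) :
    (∑ σ, if σ.image lab = S then z σ else 0) =
      ∑ τ, if τ.image lab = S.erase a then boundary z τ else 0 := by
  have hdoor : ∀ σ, (if σ.image lab = S then z σ else 0) =
      ∑ v ∈ σ, if (σ.erase v).image lab = S.erase a then z σ else 0 := by
    intro σ
    by_cases hzσ : z σ = 0
    · simp [hzσ]
    obtain ⟨hsub, _, hc⟩ := hz σ hzσ
    have himage : σ.image lab ⊆ S := image_subset_iff.2 fun v hv => (mem_filter.1 (hsub hv)).2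
    have h := congrArg (· * z σ) (sum_image_erase_eq ha himage hc)
    simpa only [sum_mul, ite_mul, one_mul, zero_mul] using h.symm
  have hboundary : ∀ τ : Finset ι, (if τ.image lab = S.erase a then boundary z τ else 0) =
      ∑ v ∈ τᶜ, if ((insert v τ).erase v).image lab = S.erase a then z (insert v τ) else 0 := by
    intro τ
    have hins : ∀ v ∈ τᶜ, (insert v τ).erase v = τ := fun v hv => erase_insert (mem_compl.1 hv)
    rw [sum_congr rfl fun v hv => by rw [hins v hv]]
    split_ifs <;> simp [boundary_apply]
  rw [sum_congr rfl fun σ _ => hdoor σ, sum_congr rfl fun τ _ => hboundary τ]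
  exact (sum_sum_compl_insert
    fun σ v => if (σ.erase v).image lab = S.erase a then z σ else 0).symm

theorem IsRainbowChainMap.sum_image_eq_one {k : ℕ} {φ : Finset A → Finset ι → ZMod 2}
    (hφ : IsRainbowChainMap L E lab k φ) (S : Finset A) (hS : #S ≤ k) :
    (∑ σ, if σ.image lab = S then φ S σ else 0) = 1 := by
  induction S using Finset.strongInduction with
  | H S ih =>
    rcases S.eq_empty_or_nonempty with rfl | ⟨a, ha⟩
    · simp [hφ.apply_empty]
    have hle : ∀ b, #(S.erase b) ≤ k := fun b => (card_le_card (erase_subset b S)).trans hS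
    rw [(hφ.isIndepChain S hS).sum_image_eq ha, ← ih _ (erase_ssubset ha) (hle a)]
    refine sum_congr rfl fun τ _ => ?_
    split_ifs with hτ
    · rw [hφ.boundary_eq S hS, Finset.sum_apply]
      refine sum_eq_single_of_mem a ha fun b hb hba => ?_
      by_contra hne
      obtain ⟨x, hx, rfl⟩ := mem_image.1 (hτ.symm ▸ mem_erase.2 ⟨hba, hb⟩ : b ∈ τ.image lab)
      exact notMem_erase _ _ (mem_filter.1 ((hφ.isIndepChain _ (hle _) τ hne).1 hx)).2
    · rfl

theorem exists_rainbow_isIndepSet [Fintype A]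
    (hE : ∀ S : Finset A, IsAcyclicBelow L {e ∈ E | lab e ∈ S} #S) :
    ∃ σ ⊆ E, L.IsIndepSet σ ∧ Set.InjOn lab σ ∧ #σ = Fintype.card A := by
  obtain ⟨φ, hφ⟩ := exists_isRainbowChainMap hE (Fintype.card A)
  have hne : (∑ σ, if σ.image lab = univ then φ univ σ else 0) ≠ 0 := by
    rw [hφ.sum_image_eq_one univ le_rfl]
    exact one_ne_zero
  obtain ⟨σ, _, hσ⟩ := exists_ne_zero_of_sum_ne_zero hne
  simp only [ne_eq, ite_eq_right_iff, Classical.not_imp] at hσ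
  obtain ⟨hsub, hind, hcard⟩ := hφ.isIndepChain univ le_rfl σ hσ.2
  exact ⟨σ, hsub.trans (filter_subset _ _), hind, by rw [← card_image_iff, hσ.1, hcard], hcard⟩

end Rainbow

section Deficiency

variable {ι A : Type*} {L : SimpleGraph ι}

/-- `L` together with `d` dummy vertices for every label, where dummies of different labels and
equal index are adjacent: an independent set has at most `d` dummies. -/
abbrev withDummies (L : SimpleGraph ι) (A : Type*) (d : ℕ) : SimpleGraph (ι ⊕ A × Fin d) :=
  L ⊕g ((⊤ : SimpleGraph A) □ (⊥ : SimpleGraph (Fin d)))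

theorem AcyclicCert.disjSum_dummies [DecidableEq ι] [DecidableEq A] {G : Finset ι} {k d : ℕ}
    (h : AcyclicCert L G k) {S : Finset A} (hS : S.Nonempty) (D : Finset (Fin d)) :
    AcyclicCert (withDummies L A d) (G.disjSum (S ×ˢ D)) (k + #D) := by
  induction D using Finset.induction_on with
  | empty =>
    rw [product_empty, disjSum_empty, card_empty, add_zero]
    exact h.map SimpleGraph.Embedding.sumInl
  | insert i D hi ih =>
    have hunion : G.disjSum (S ×ˢ insert i D) =
        G.disjSum (S ×ˢ D) ∪ S.image fun a => Sum.inr (a, i) := by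
      ext (g | ⟨a, j⟩)
      · simp
      · simp only [inr_mem_disjSum, mem_product, mem_insert, mem_union, mem_image, Sum.inr.injEq,
          Prod.mk.injEq]
        grind
    rw [card_insert_of_notMem hi, ← add_assoc, hunion]
    refine ih.union_clique (hS.image _) ?_ ?_
    · rintro x hx y hy hxy
      obtain ⟨a, _, rfl⟩ := mem_image.1 (mem_coe.1 hx)
      obtain ⟨b, _, rfl⟩ := mem_image.1 (mem_coe.1 hy)
      have hab : a ≠ b := fun h => hxy (by rw [h])
      simpa using hab
    · rintro t ht (g | ⟨b, j⟩) hw <;> obtain ⟨a, _, rfl⟩ := mem_image.1 ht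
      · simp
      · have hij : i ≠ j := fun h => hi (h ▸ (mem_product.1 (inr_mem_disjSum.1 hw)).2)
        simp [hij]

theorem card_toRight_le_of_isIndepSet {d : ℕ} {σ : Finset (ι ⊕ A × Fin d)}
    (hσ : (withDummies L A d).IsIndepSet σ) : #σ.toRight ≤ d := by
  refine le_trans ?_ (card_fin d).le
  refine card_le_card_of_injOn Prod.snd (by simp) fun x hx y hy hxy => ?_
  by_contra hne
  have hx' := mem_coe.2 (mem_toRight.1 (mem_coe.1 hx))
  have hy' := mem_coe.2 (mem_toRight.1 (mem_coe.1 hy))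
  have hfst : x.1 ≠ y.1 := fun h => hne (Prod.ext h hxy)
  exact hσ hx' hy' (by simpa using hne) (by simp [SimpleGraph.boxProd_adj, hfst, hxy])

theorem exists_acyclicCert_le [Finite ι] [DecidableEq ι] [Fintype A] [DecidableEq A]
    (L : SimpleGraph ι) (E : Finset ι) (lab : ι → A) (ν : ℕ)
    (hν : ∀ σ ⊆ E, L.IsIndepSet σ → Set.InjOn lab σ → #σ ≤ ν) :
    ∃ S : Finset A, ∀ k, AcyclicCert L {e ∈ E | lab e ∈ S} k → k + Fintype.card A ≤ #S + ν := by
  have := Fintype.ofFinite ι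
  by_cases hn : Fintype.card A ≤ ν
  · refine ⟨∅, fun k hk => ?_⟩
    simp only [notMem_empty, filter_false] at hk
    simpa [hk.eq_zero_of_empty] using hn
  by_contra! hcon
  obtain ⟨d, hd⟩ : ∃ d, Fintype.card A = ν + d + 1 := ⟨Fintype.card A - ν - 1, by omega⟩
  set lab' : ι ⊕ A × Fin d → A := Sum.elim lab Prod.fst with hlab'
  have hacyclic (S : Finset A) : IsAcyclicBelow (withDummies L A d)
      {e ∈ E.disjSum univ | lab' e ∈ S} #S := by
    rcases S.eq_empty_or_nonempty with rfl | hS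
    · exact (AcyclicCert.zero _).isAcyclicBelow
    obtain ⟨k, hk, hkν⟩ := hcon S
    have hcert := hk.disjSum_dummies hS (univ : Finset (Fin d))
    rw [card_univ, Fintype.card_fin] at hcert
    convert (hcert.mono #S (by omega)).isAcyclicBelow using 1
    ext (g | ⟨b, j⟩) <;> simp [hlab']
  obtain ⟨σ, hσE, hσ, hσlab, hσcard⟩ := exists_rainbow_isIndepSet hacyclic
  have hmem : ∀ {x}, x ∈ (σ.toLeft : Set ι) → Sum.inl x ∈ (σ : Set (ι ⊕ A × Fin d)) :=
    fun hx => mem_coe.2 (mem_toLeft.1 (mem_coe.1 hx))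
  have hleft : #σ.toLeft ≤ ν := by
    refine hν _ (fun x hx => by simpa using hσE (hmem hx)) (fun x hx y hy hxy => ?_)
      fun x hx y hy hxy => Sum.inl_injective (hσlab (hmem hx) (hmem hy) hxy)
    simpa using hσ (hmem hx) (hmem hy) (by simpa using hxy)
  have hright := card_toRight_le_of_isIndepSet hσ
  have hsum := card_toLeft_add_card_toRight (u := σ)
  omega

end Deficiency

section CertBound

variable {ι : Type*} [DecidableEq ι] {L : SimpleGraph ι} {N X : ℤ} {G : Finset ι}

/-- `G` has an acyclicity certificate of level at least `X / N`. The denominator is cleared so that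
the potentials bounding the level from below stay integral. -/
def CertBound (L : SimpleGraph ι) (N : ℤ) (G : Finset ι) (X : ℤ) : Prop :=
  ∃ k : ℕ, X ≤ N * k ∧ AcyclicCert L G k

namespace CertBound

theorem mono {Y : ℤ} (h : CertBound L N G X) (hY : Y ≤ X) : CertBound L N G Y :=
  h.imp fun _ hk => ⟨hY.trans hk.1, hk.2⟩

theorem of_isolated (hN : 1 ≤ N) {e : ι} (he : e ∈ G) (hiso : ∀ g ∈ G, ¬ L.Adj e g) :
    CertBound L N G X := by
  refine ⟨X.toNat, ?_, .isolated G e _ he hiso⟩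
  nlinarith [Int.self_le_toNat X, Int.natCast_nonneg X.toNat]

theorem step {f : ι} (hf : f ∈ G) (hdel : CertBound L N (G.erase f) X)
    (hlink : CertBound L N (nonNeighbors L G f) (X - N)) : CertBound L N G X := by
  obtain ⟨k₁, hk₁, hc₁⟩ := hdel
  obtain ⟨k₂, hk₂, hc₂⟩ := hlink
  rcases k₁ with _ | k
  · exact ⟨0, hk₁, .zero _⟩
  rcases le_total k k₂ with h | h
  · exact ⟨k + 1, hk₁, .step G f k hf hc₁ (hc₂.mono _ h)⟩
  · refine ⟨k₂ + 1, ?_, .step G f k₂ hf (hc₁.mono _ (by omega)) hc₂⟩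
    push_cast
    linarith

theorem of_ranked_star (hN : 1 ≤ N) {e : ι} (he : e ∈ G) (rk : ι → ℕ)
    (hlink : ∀ f ∈ G, L.Adj e f → ∀ G' ⊆ G, (∀ g ∈ G, ¬ L.Adj e g ∨ rk f < rk g → g ∈ G') →
      (∀ g ∈ G', L.Adj e g → rk f ≤ rk g) → CertBound L N (nonNeighbors L G' f) (X - N)) :
    CertBound L N G X := by
  classical
  suffices key : ∀ G' ⊆ G, e ∈ G' → (∀ g ∈ G, ¬ L.Adj e g → g ∈ G') →
      (∀ f ∈ G', ∀ g ∈ G, L.Adj e f → L.Adj e g → rk f < rk g → g ∈ G') → CertBound L N G' X from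
    key G subset_rfl he (fun g hg _ => hg) fun f _ g hg _ _ _ => hg
  intro G'
  induction G' using Finset.strongInduction with | H G' ih => ?_
  intro hsub he' hfar hup
  rcases {f ∈ G' | L.Adj e f}.eq_empty_or_nonempty with hnone | hsome
  · exact of_isolated hN he' fun g hg hadj =>
      notMem_empty g (hnone ▸ mem_filter.2 ⟨hg, hadj⟩)
  obtain ⟨f, hf, hmin⟩ := exists_min_image _ rk hsome
  obtain ⟨hfG', hadj⟩ := mem_filter.1 hf
  refine step hfG' (ih _ (erase_ssubset hfG') ((erase_subset _ _).trans hsub)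
    (mem_erase.2 ⟨hadj.ne, he'⟩) ?_ ?_) ?_
  · exact fun g hg hg' => mem_erase.2 ⟨fun h => hg' (h ▸ hadj), hfar g hg hg'⟩
  · intro f' hf' g hg hadj' hg' hlt
    have hf'G' := mem_of_mem_erase hf'
    refine mem_erase.2 ⟨fun h => ?_, hup f' hf'G' g hg hadj' hg' hlt⟩
    exact absurd (hmin f' (mem_filter.2 ⟨hf'G', hadj'⟩)) (by simpa [← h] using hlt)
  · refine hlink f (hsub hfG') hadj G' hsub ?_ fun g hg hg' => hmin g (mem_filter.2 ⟨hg, hg'⟩)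
    rintro g hg (hg' | hlt)
    · exact hfar g hg hg'
    · by_cases hg' : L.Adj e g
      · exact hup f hfG' g hg hadj hg' hlt
      · exact hfar g hg hg'

end CertBound

end CertBound

/-! ### Matchings of bipartite multigraphs -/

section Bimatching

variable {ι β γ : Type*} {p : ι → β} {q : ι → γ} {G G' M : Finset ι}

/-- Two distinct edges of the bipartite multigraph with end maps `p` and `q` conflict if they share
an end; the independent sets of the conflict graph are the matchings. -/
def conflictGraph (p : ι → β) (q : ι → γ) : SimpleGraph ι where
  Adj e f := e ≠ f ∧ (p e = p f ∨ q e = q f)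
  symm := ⟨fun _ _ h => ⟨h.1.symm, h.2.imp Eq.symm Eq.symm⟩⟩
  loopless := ⟨fun _ h => h.1 rfl⟩

theorem conflictGraph_adj {e f : ι} :
    (conflictGraph p q).Adj e f ↔ e ≠ f ∧ (p e = p f ∨ q e = q f) :=
  Iff.rfl

/-- `M` is a matching of the bipartite multigraph with end maps `p` and `q`. -/
def IsBimatching (p : ι → β) (q : ι → γ) (M : Finset ι) : Prop :=
  Set.InjOn p M ∧ Set.InjOn q M

theorem isIndepSet_conflictGraph_iff :
    (conflictGraph p q).IsIndepSet M ↔ IsBimatching p q M := by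
  simp only [SimpleGraph.IsIndepSet, Set.Pairwise, conflictGraph_adj, IsBimatching, Set.InjOn]
  grind

theorem mem_nonNeighbors_conflictGraph {f g : ι} :
    g ∈ nonNeighbors (conflictGraph p q) G f ↔ g ∈ G ∧ p g ≠ p f ∧ q g ≠ q f := by
  rw [mem_nonNeighbors, conflictGraph_adj]
  grind

theorem IsBimatching.mono (h : IsBimatching p q M) {M' : Finset ι} (hM : M' ⊆ M) :
    IsBimatching p q M' :=
  ⟨h.1.mono (coe_subset.2 hM), h.2.mono (coe_subset.2 hM)⟩

theorem IsBimatching.insert [DecidableEq ι] (h : IsBimatching p q M) {e : ι}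
    (he : ∀ g ∈ M, p g ≠ p e ∧ q g ≠ q e) : IsBimatching p q (insert e M) := by
  simp only [IsBimatching, Set.InjOn, mem_coe, mem_insert] at h ⊢
  grind

open Classical in
/-- The matching number of the bipartite multigraph with edge set `G` and end maps `p`, `q`. -/
noncomputable def bimatchNum (p : ι → β) (q : ι → γ) (G : Finset ι) : ℕ :=
  {M ∈ G.powerset | IsBimatching p q M}.sup card

theorem IsBimatching.card_le_bimatchNum (h : IsBimatching p q M) (hM : M ⊆ G) :
    #M ≤ bimatchNum p q G := by
  classical
  exact le_sup (f := card) (mem_filter.2 ⟨mem_powerset.2 hM, h⟩)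

/-- `M` is a maximum matching of the bipartite multigraph `G`. -/
structure IsMaxBimatching (p : ι → β) (q : ι → γ) (G M : Finset ι) : Prop where
  subset : M ⊆ G
  isBimatching : IsBimatching p q M
  card_eq : #M = bimatchNum p q G

theorem exists_isMaxBimatching (p : ι → β) (q : ι → γ) (G : Finset ι) :
    ∃ M, IsMaxBimatching p q G M := by
  classical
  obtain ⟨M, hM, h⟩ := exists_mem_eq_sup {M ∈ G.powerset | IsBimatching p q M}
    ⟨∅, mem_filter.2 ⟨empty_mem_powerset G, by simp [IsBimatching]⟩⟩ card
  obtain ⟨hsub, hmatch⟩ := mem_filter.1 hM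
  exact ⟨M, mem_powerset.1 hsub, hmatch, h.symm⟩

theorem bimatchNum_mono (h : G' ⊆ G) : bimatchNum p q G' ≤ bimatchNum p q G := by
  obtain ⟨M, hM⟩ := exists_isMaxBimatching p q G'
  exact hM.card_eq ▸ hM.isBimatching.card_le_bimatchNum (hM.subset.trans h)

end Bimatching

section DeleteVerts

variable {ι β γ : Type*} [DecidableEq β] [DecidableEq γ] {p : ι → β} {q : ι → γ}
  {G G' M : Finset ι} {Y Y' : Finset β} {Z Z' : Finset γ}

/-- The multigraph obtained from `G` by deleting the left vertices `Y` and the right vertices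
`Z`. -/
def deleteVerts (p : ι → β) (q : ι → γ) (G : Finset ι) (Y : Finset β) (Z : Finset γ) : Finset ι :=
  {g ∈ G | p g ∉ Y ∧ q g ∉ Z}

theorem mem_deleteVerts {g : ι} :
    g ∈ deleteVerts p q G Y Z ↔ g ∈ G ∧ p g ∉ Y ∧ q g ∉ Z :=
  mem_filter

theorem deleteVerts_subset : deleteVerts p q G Y Z ⊆ G :=
  filter_subset _ _

theorem deleteVerts_mono (h : G' ⊆ G) : deleteVerts p q G' Y Z ⊆ deleteVerts p q G Y Z :=
  filter_subset_filter _ h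

theorem deleteVerts_ssubset {g : ι} (hg : g ∈ G) (h : p g ∈ Y ∨ q g ∈ Z) :
    deleteVerts p q G Y Z ⊂ G :=
  filter_ssubset.2 ⟨g, hg, fun hcon => h.elim hcon.1 hcon.2⟩

theorem deleteVerts_deleteVerts : deleteVerts p q (deleteVerts p q G Y Z) Y' Z' =
    deleteVerts p q G (Y' ∪ Y) (Z' ∪ Z) := by
  ext g
  simp only [mem_deleteVerts, mem_union]
  tauto

theorem card_filter_le_of_injOn {α δ : Type*} [DecidableEq δ] {f : α → δ} {s : Finset α}
    (hf : Set.InjOn f s) (t : Finset δ) : #{x ∈ s | f x ∈ t} ≤ #t :=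
  card_le_card_of_injOn f (fun _ hx => (mem_filter.1 hx).2)
    (hf.mono (coe_subset.2 (filter_subset _ _)))

theorem IsBimatching.card_le_deleteVerts (h : IsBimatching p q M) (Y : Finset β) (Z : Finset γ) :
    #M ≤ #(deleteVerts p q M Y Z) + #Y + #Z := by
  classical
  have hcover : M ⊆ deleteVerts p q M Y Z ∪ {g ∈ M | p g ∈ Y} ∪ {g ∈ M | q g ∈ Z} := by
    intro g hg
    simp only [mem_union, mem_deleteVerts, mem_filter, hg, true_and]
    tauto
  calc #M ≤ #(deleteVerts p q M Y Z ∪ {g ∈ M | p g ∈ Y}) + #{g ∈ M | q g ∈ Z} :=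
        (card_le_card hcover).trans (card_union_le _ _)
    _ ≤ #(deleteVerts p q M Y Z) + #{g ∈ M | p g ∈ Y} + #{g ∈ M | q g ∈ Z} := by
        gcongr; exact card_union_le _ _
    _ ≤ _ := by
        gcongr
        · exact card_filter_le_of_injOn h.1 Y
        · exact card_filter_le_of_injOn h.2 Z

theorem IsBimatching.card_deleteVerts_le (h : IsBimatching p q M) (hM : M ⊆ G) (Y : Finset β)
    (Z : Finset γ) : #(deleteVerts p q M Y Z) ≤ bimatchNum p q (deleteVerts p q G Y Z) :=
  (h.mono deleteVerts_subset).card_le_bimatchNum (deleteVerts_mono hM)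

theorem bimatchNum_le_deleteVerts (G : Finset ι) (Y : Finset β) (Z : Finset γ) :
    bimatchNum p q G ≤ bimatchNum p q (deleteVerts p q G Y Z) + #Y + #Z := by
  obtain ⟨M, hM⟩ := exists_isMaxBimatching p q G
  have := hM.isBimatching.card_deleteVerts_le hM.subset Y Z
  have := hM.isBimatching.card_le_deleteVerts Y Z
  have := hM.card_eq
  omega

theorem IsMaxBimatching.bimatchNum_le_deleteVerts_pair (hM : IsMaxBimatching p q G M) {e : ι}
    (he : e ∈ M) (y : β) :
    bimatchNum p q G ≤ bimatchNum p q (deleteVerts p q G {p e, y} {q e}) + 2 := by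
  have := hM.isBimatching.card_deleteVerts_le hM.subset {p e, y} {q e}
  have heq : deleteVerts p q M {p e, y} {q e} = deleteVerts p q M {p e, y} ∅ := by
    ext g
    simp only [mem_deleteVerts, mem_insert, mem_singleton, notMem_empty, not_false_eq_true,
      and_true, not_or]
    exact ⟨fun h => ⟨h.1, h.2.1⟩,
      fun h => ⟨h.1, h.2, fun hq => h.2.1 (by rw [hM.isBimatching.2 h.1 he hq])⟩⟩
  have hcard := hM.isBimatching.card_le_deleteVerts {p e, y} ∅
  rw [← heq, card_empty] at hcard
  have : #({p e, y} : Finset β) ≤ 2 := card_le_two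
  have := hM.card_eq
  omega

end DeleteVerts

section DegreeLE

theorem card_filter_mem_le {ι α : Type*} [DecidableEq α] {f : ι → α} {s : Finset ι} {r : ℕ}
    (h : ∀ a, #{x ∈ s | f x = a} ≤ r) (S : Finset α) : #{x ∈ s | f x ∈ S} ≤ #S * r :=
  (sum_card_fiberwise_eq_card_filter s S f).symm.trans_le
    (sum_le_card_nsmul S _ r fun a _ => h a)

theorem card_filter_mem_eq {ι α : Type*} [DecidableEq α] {f : ι → α} {s : Finset ι} {r : ℕ}
    (h : ∀ a, #{x ∈ s | f x = a} = r) (S : Finset α) : #{x ∈ s | f x ∈ S} = #S * r := by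
  rw [← sum_card_fiberwise_eq_card_filter]
  exact sum_const_nat fun a _ => h a

variable {ι β γ : Type*} [DecidableEq β] [DecidableEq γ] {p : ι → β} {q : ι → γ} {r : ℕ}
  {G G' : Finset ι}

/-- All vertices of the bipartite multigraph `G` have degree at most `r`. -/
structure DegreeLE (p : ι → β) (q : ι → γ) (r : ℕ) (G : Finset ι) : Prop where
  left : ∀ y, #{g ∈ G | p g = y} ≤ r
  right : ∀ z, #{g ∈ G | q g = z} ≤ r

theorem DegreeLE.mono (h : DegreeLE p q r G) (hs : G' ⊆ G) : DegreeLE p q r G' :=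
  ⟨fun y => (card_le_card (filter_subset_filter _ hs)).trans (h.left y),
    fun z => (card_le_card (filter_subset_filter _ hs)).trans (h.right z)⟩

theorem DegreeLE.card_add_card_le (h : DegreeLE p q r G) {Y : Finset β} {Z : Finset γ}
    (hG' : deleteVerts p q G Y Z ⊆ G') {W : Finset ι}
    (hW : ∀ g ∈ W, g ∈ G ∧ p g ∈ Y ∧ q g ∈ Z) : #G + #W ≤ #G' + #Y * r + #Z * r := by
  classical
  have hinter : W ⊆ {g ∈ G | p g ∈ Y} ∩ {g ∈ G | q g ∈ Z} := fun g hg => by simp [hW g hg]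
  have hcover : G ⊆ G' ∪ ({g ∈ G | p g ∈ Y} ∪ {g ∈ G | q g ∈ Z}) := by
    intro g hg
    have := @hG' g
    simp only [mem_deleteVerts, mem_union, mem_filter, hg, true_and] at this ⊢
    tauto
  have := card_union_add_card_inter {g ∈ G | p g ∈ Y} {g ∈ G | q g ∈ Z}
  have := card_le_card hinter
  have := (card_le_card hcover).trans (card_union_le _ _)
  have := card_filter_mem_le h.left Y
  have := card_filter_mem_le h.right Z
  omega

theorem DegreeLE.card_le (h : DegreeLE p q r G) {Y : Finset β} {Z : Finset γ}
    (hG' : deleteVerts p q G Y Z ⊆ G') : #G ≤ #G' + #Y * r + #Z * r := by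
  simpa using h.card_add_card_le hG' (W := ∅) (by simp)

theorem DegreeLE.card_deleteVerts_edge (h : DegreeLE p q r G) {e f : ι} (he : e ∈ G)
    (hp : p f = p e) : #G + 1 ≤ #(deleteVerts p q G {p f} {q e}) + 2 * r := by
  have := h.card_add_card_le (Y := {p f}) (Z := {q e}) subset_rfl (W := {e}) (by simp [he, hp])
  simp only [card_singleton, one_mul] at this
  omega

theorem DegreeLE.card_deleteVerts_pair (h : DegreeLE p q r G) {e f : ι} (he : e ∈ G)
    (hf : f ∈ G) (hq : q f = q e) (hp : p f ≠ p e) :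
    #G + 2 ≤ #(deleteVerts p q G {p e, p f} {q e}) + 3 * r := by
  classical
  have := h.card_add_card_le (Y := {p e, p f}) (Z := {q e}) subset_rfl (W := {e, f})
    (by simp [he, hf, hq])
  rw [card_singleton, card_pair hp.symm, card_pair (fun h => hp (by rw [h]))] at this
  omega

end DegreeLE

section Saturation

variable {ι β γ : Type*} {p : ι → β} {q : ι → γ} {G M : Finset ι} {z : γ} {e : ι}

/-- The right vertex `z` is inessential in `G` if some maximum matching of `G` misses it. -/
def IsInessential (p : ι → β) (q : ι → γ) (G : Finset ι) (z : γ) : Prop :=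
  ∃ M, IsMaxBimatching p q G M ∧ ∀ g ∈ M, q g ≠ z

theorem IsMaxBimatching.exists_left_eq (hM : IsMaxBimatching p q G M) (he : e ∈ G)
    (hq : ∀ g ∈ M, q g ≠ q e) : ∃ f ∈ M, p f = p e := by
  classical
  by_contra! hcon
  have hcard := (hM.isBimatching.insert fun g hg => ⟨hcon g hg, hq g hg⟩).card_le_bimatchNum
    (insert_subset he hM.subset)
  rw [card_insert_of_notMem fun h => hq e h rfl, hM.card_eq] at hcard
  omega

theorem exists_isMaxBimatching_mem_right (he : e ∈ G) :
    ∃ M, IsMaxBimatching p q G M ∧ ∃ f ∈ M, q f = q e := by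
  classical
  obtain ⟨M, hM⟩ := exists_isMaxBimatching p q G
  by_cases h : ∃ f ∈ M, q f = q e
  · exact ⟨M, hM, h⟩
  push Not at h
  obtain ⟨f, hf, hp⟩ := hM.exists_left_eq he h
  refine ⟨insert e (M.erase f), ⟨?_, ?_, ?_⟩, e, mem_insert_self _ _, rfl⟩
  · exact insert_subset he ((erase_subset _ _).trans hM.subset)
  · refine (hM.isBimatching.mono (erase_subset _ _)).insert fun g hg => ?_
    obtain ⟨hgf, hgM⟩ := mem_erase.1 hg
    exact ⟨fun h => hgf (hM.isBimatching.1 hgM hf (h.trans hp.symm)), h g hgM⟩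
  · rw [card_insert_of_notMem fun h' => h e (mem_of_mem_erase h') rfl, card_erase_add_one hf,
      hM.card_eq]

variable [DecidableEq γ]

theorem bimatchNum_le_card_image_right (G : Finset ι) : bimatchNum p q G ≤ #(G.image q) := by
  obtain ⟨M, hM⟩ := exists_isMaxBimatching p q G
  rw [← hM.card_eq, ← card_image_of_injOn hM.isBimatching.2]
  exact card_le_card (image_subset_image hM.subset)

/-- `G` has a matching covering all its right vertices. -/
def RightSaturated (p : ι → β) (q : ι → γ) (G : Finset ι) : Prop :=
  bimatchNum p q G = #(G.image q)

theorem RightSaturated.image_eq (h : RightSaturated p q G) (hM : IsMaxBimatching p q G M) :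
    M.image q = G.image q :=
  eq_of_subset_of_card_le (image_subset_image hM.subset)
    (by rw [card_image_of_injOn hM.isBimatching.2, hM.card_eq, h])

theorem RightSaturated.not_isInessential (h : RightSaturated p q G) (hz : z ∈ G.image q) :
    ¬ IsInessential p q G z := by
  rintro ⟨M, hM, hmiss⟩
  obtain ⟨g, hg, hgz⟩ := mem_image.1 (h.image_eq hM ▸ hz)
  exact hmiss g hg hgz

theorem exists_isInessential_of_not_rightSaturated (h : ¬ RightSaturated p q G) :
    ∃ e ∈ G, IsInessential p q G (q e) := by
  obtain ⟨M, hM⟩ := exists_isMaxBimatching p q G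
  have hlt : #(M.image q) < #(G.image q) := by
    rw [card_image_of_injOn hM.isBimatching.2, hM.card_eq]
    exact (bimatchNum_le_card_image_right G).lt_of_ne h
  obtain ⟨z, hz, hzM⟩ := exists_mem_notMem_of_card_lt_card hlt
  obtain ⟨e, he, rfl⟩ := mem_image.1 hz
  exact ⟨e, he, M, hM, fun g hg hgz => hzM (mem_image.2 ⟨g, hg, hgz⟩)⟩

variable [DecidableEq β] {Z Z' : Finset γ}

/-- The set of left vertices adjacent to some right vertex in `Z`. Swapping the two end maps gives
the neighbourhoods of sets of left vertices. -/
def nbhd (p : ι → β) (q : ι → γ) (G : Finset ι) (Z : Finset γ) : Finset β :=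
  {g ∈ G | q g ∈ Z}.image p

theorem mem_nbhd {y : β} : y ∈ nbhd p q G Z ↔ ∃ g ∈ G, q g ∈ Z ∧ p g = y := by
  simp [nbhd, and_assoc]

theorem mem_nbhd_of_mem (he : e ∈ G) (hz : q e ∈ Z) : p e ∈ nbhd p q G Z :=
  mem_nbhd.2 ⟨e, he, hz, rfl⟩

theorem nbhd_mono (h : Z ⊆ Z') : nbhd p q G Z ⊆ nbhd p q G Z' := by
  intro y
  simp only [mem_nbhd]
  exact fun ⟨g, hg, hz, hy⟩ => ⟨g, hg, h hz, hy⟩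

theorem nbhd_union : nbhd p q G (Z ∪ Z') = nbhd p q G Z ∪ nbhd p q G Z' := by
  ext y
  simp only [mem_nbhd, mem_union]
  grind

theorem RightSaturated.card_le_card_nbhd (h : RightSaturated p q G) (hZ : Z ⊆ G.image q) :
    #Z ≤ #(nbhd p q G Z) := by
  obtain ⟨M, hM⟩ := exists_isMaxBimatching p q G
  have hcover : Z ⊆ {g ∈ M | q g ∈ Z}.image q := by
    intro z hz
    obtain ⟨g, hg, rfl⟩ := mem_image.1 (h.image_eq hM ▸ hZ hz)
    exact mem_image_of_mem q (mem_filter.2 ⟨hg, hz⟩)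
  calc #Z ≤ #{g ∈ M | q g ∈ Z} := (card_le_card hcover).trans card_image_le
    _ = #({g ∈ M | q g ∈ Z}.image p) :=
        (card_image_of_injOn (hM.isBimatching.mono (filter_subset _ _)).1).symm
    _ ≤ #(nbhd p q G Z) :=
        card_le_card (image_subset_image (filter_subset_filter _ hM.subset))

end Saturation

section StarDecomposition

variable {ι β γ : Type*} {p : ι → β} {q : ι → γ} {N X : ℤ} {G G' M : Finset ι} {e f : ι}

theorem nonNeighbors_ssubset (hG' : G' ⊆ G) (hf : f ∈ G) :
    nonNeighbors (conflictGraph p q) G' f ⊂ G :=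
  (ssubset_iff_of_subset fun _ hg => hG' (mem_nonNeighbors.1 hg).1).2
    ⟨f, hf, fun hcon => (mem_nonNeighbors.1 hcon).2.1 rfl⟩

variable [DecidableEq ι] [DecidableEq β] [DecidableEq γ]

/-- The star of `e` is removed in the order: the other edges at the left end of `e`, those at its
right end, its parallel copies. -/
theorem CertBound.of_edge (hN : 1 ≤ N) (he : e ∈ G)
    (hleft : ∀ f ∈ G, p f = p e →
      CertBound (conflictGraph p q) N (deleteVerts p q G {p e} {q f}) (X - N))
    (hright : ∀ f ∈ G, q f = q e → p f ≠ p e →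
      CertBound (conflictGraph p q) N (deleteVerts p q G {p e, p f} {q e}) (X - N)) :
    CertBound (conflictGraph p q) N G X := by
  refine of_ranked_star hN he
    (fun g => if p g = p e then if q g = q e then 2 else 0 else 1) ?_
  intro f hf hadj G' hsub hkeep hrk
  rw [conflictGraph_adj] at hadj
  simp only [conflictGraph_adj] at hkeep hrk
  by_cases hp : p f = p e
  · convert hleft f hf hp using 1
    ext g
    have := hkeep g
    have := hrk g
    have := @hsub g
    simp only [mem_nonNeighbors_conflictGraph, mem_deleteVerts, mem_singleton]
    grind
  · have hq := hadj.2.resolve_left (Ne.symm hp)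
    simp only [if_neg hp] at hkeep hrk
    convert hright f hf hq.symm hp using 1
    ext g
    have hkeep' := hkeep g
    have hrk' := hrk g
    have := @hsub g
    have hne : q g ≠ q e → e ≠ g := fun h h' => h (by rw [h'])
    simp only [mem_nonNeighbors_conflictGraph, mem_deleteVerts, mem_singleton, mem_insert]
    by_cases hpg : p g = p e <;> by_cases hqg : q g = q e <;>
      simp only [hpg, hqg, ↓reduceIte] at hkeep' hrk' <;> grind

end StarDecomposition

section StarOfInessential

variable {ι β γ : Type*} [DecidableEq ι] [DecidableEq β] [DecidableEq γ] {p : ι → β} {q : ι → γ}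
  {N X : ℤ} {r : ℕ} {G : Finset ι} {e e₁ : ι}

/-- The star of `e` is removed in the order: the edges at its left end not parallel to `e` or `e₁`,
those at its right end, the copies of `e₁`, the copies of `e`. -/
theorem CertBound.of_edge_pair (hN : 1 ≤ N) (he : e ∈ G) (hq : q e₁ ≠ q e)
    (hleft : ∀ f ∈ G, p f = p e →
      CertBound (conflictGraph p q) N (deleteVerts p q G {p f} {q f}) (X - N))
    (hright : ∀ f ∈ G, p f ≠ p e → ∀ H ⊂ G, deleteVerts p q G {p e, p f} {q e} ⊆ H →
      (∀ g ∈ G, p g = p e → q g = q e₁ → g ∈ H) → CertBound (conflictGraph p q) N H (X - N))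
    (hpar : ∀ H ⊂ G, deleteVerts p q G {p e} {q e, q e₁} ⊆ H →
      CertBound (conflictGraph p q) N H (X - N)) :
    CertBound (conflictGraph p q) N G X := by
  refine of_ranked_star hN he (fun g =>
    if p g = p e then if q g = q e then 3 else if q g = q e₁ then 2 else 0 else 1) ?_
  intro f hf hadj G' hsub hkeep _
  have hne {g : ι} : q g ≠ q e → e ≠ g := fun h h' => h (by rw [h'])
  rw [conflictGraph_adj] at hadj
  simp only [conflictGraph_adj] at hkeep
  by_cases hp : p f = p e
  · simp only [if_pos hp] at hkeep
    by_cases hqe : q f = q e ∨ q f = q e₁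
    · refine hpar _ (nonNeighbors_ssubset hsub hf) fun g hg => ?_
      have := hkeep g
      simp only [mem_deleteVerts, mem_singleton, mem_insert] at hg
      rw [mem_nonNeighbors_conflictGraph]
      grind
    · push Not at hqe
      simp only [if_neg hqe.1, if_neg hqe.2] at hkeep
      convert hleft f hf hp using 1
      ext g
      have := hkeep g
      have := @hsub g
      simp only [mem_nonNeighbors_conflictGraph, mem_deleteVerts, mem_singleton]
      grind
  · simp only [if_neg hp] at hkeep
    refine hright f hf hp _ (nonNeighbors_ssubset hsub hf) (fun g hg => ?_) fun g hg hpg hqg => ?_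
    · have := hkeep g
      simp only [mem_deleteVerts, mem_singleton, mem_insert] at hg
      rw [mem_nonNeighbors_conflictGraph]
      grind
    · have := hkeep g hg
      rw [mem_nonNeighbors_conflictGraph]
      grind

/-- Edges at an inessential vertex lose at most one unit of the matching number, except for those
through `p e` with an essential right end. -/
theorem CertBound.of_inessential (hN : 1 ≤ N) (hdeg : DegreeLE p q r G) (he : e ∈ G)
    (hz : IsInessential p q G (q e))
    (hgain : ∀ H ⊂ G, bimatchNum p q G ≤ bimatchNum p q H + 1 → #G ≤ #H + 3 * r →
      CertBound (conflictGraph p q) N H (X - N))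
    (hneutral : ∀ f ∈ G, p f = p e → ¬ IsInessential p q G (q f) →
      CertBound (conflictGraph p q) N (deleteVerts p q G {p f} {q f}) (X - N)) :
    CertBound (conflictGraph p q) N G X := by
  have gain {Y : Finset β} {Z : Finset γ} (hYZ : #Y + #Z ≤ 3) {H K : Finset ι} (hH : H ⊂ G)
      (hdel : deleteVerts p q G Y Z ⊆ H) (hK : IsBimatching p q K) (hKH : K ⊆ H)
      (hcard : bimatchNum p q G ≤ #K + 1) : CertBound (conflictGraph p q) N H (X - N) := by
    refine hgain H hH (hcard.trans (by gcongr; exact hK.card_le_bimatchNum hKH)) ?_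
    have := hdeg.card_le hdel
    nlinarith
  obtain ⟨M, hM, hMz⟩ := hz
  obtain ⟨e₁, he₁, hpe₁⟩ := hM.exists_left_eq he hMz
  have hone {M' : Finset ι} (hM' : IsMaxBimatching p q G M') (y : β) :
      bimatchNum p q G ≤ #(deleteVerts p q M' {y} ∅) + 1 := by
    simpa [hM'.card_eq] using hM'.isBimatching.card_le_deleteVerts {y} ∅
  refine of_edge_pair hN he (hMz e₁ he₁) (fun f hf hpf => ?_) (fun f _ hpf H hH hdel hcopies => ?_)
    fun H hH hdel => ?_
  · by_cases hf' : IsInessential p q G (q f)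
    · obtain ⟨M', hM', hMf⟩ := hf'
      refine gain (by simp) (deleteVerts_ssubset hf (by simp)) subset_rfl
        (hM'.isBimatching.mono deleteVerts_subset) (fun g hg => ?_) (hone hM' (p f))
      simp only [mem_deleteVerts, notMem_empty, not_false_eq_true, and_true] at hg ⊢
      exact ⟨hM'.subset hg.1, hg.2, by simpa using hMf g hg.1⟩
    · exact hneutral f hf hpf hf'
  · refine gain (by grind [card_pair]) hH hdel (hM.isBimatching.mono deleteVerts_subset)
      (fun g hg => ?_) (hone hM (p f))
    have hgM := (mem_deleteVerts.1 hg).1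
    by_cases hpg : p g = p e
    · obtain rfl := hM.isBimatching.1 hgM he₁ (hpg.trans hpe₁.symm)
      exact hcopies g (hM.subset hgM) hpg rfl
    · refine hdel (mem_deleteVerts.2 ⟨hM.subset hgM, ?_, by simpa using hMz g hgM⟩)
      simpa [hpg] using (mem_deleteVerts.1 hg).2.1
  · refine gain (by grind [card_pair]) hH hdel (hM.isBimatching.mono (erase_subset e₁ M))
      (fun g hg => hdel ?_) (by rw [card_erase_add_one he₁, hM.card_eq])
    obtain ⟨hne, hgM⟩ := mem_erase.1 hg
    have hpg : p g ≠ p e := fun h => hne (hM.isBimatching.1 hgM he₁ (h.trans hpe₁.symm))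
    have hqg : q g ≠ q e₁ := fun h => hne (hM.isBimatching.2 hgM he₁ h)
    simp [mem_deleteVerts, hM.subset hgM, hpg, hqg, hMz g hgM]

end StarOfInessential

/-! ### The weight bound -/

section Weight

variable {ι β γ : Type*} {p : ι → β} {q : ι → γ} {r : ℕ} {G G' : Finset ι}

/-- The weight of `G`, a lower bound on `24 * r ^ 2` times the acyclicity level of the matching
complex of `G` up to a correction for its full 4-cycles. -/
noncomputable def weight (p : ι → β) (q : ι → γ) (r : ℕ) (G : Finset ι) : ℤ :=
  (12 * r ^ 2 - 8 * r + 1) * bimatchNum p q G + 8 * #G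

theorem one_le_weight_coeff (hr : 2 ≤ r) : (1 : ℤ) ≤ 12 * r ^ 2 - 8 * r + 1 := by
  zify at hr
  nlinarith

theorem weight_le_of_neutral (hr : 2 ≤ r) {s : ℕ}
    (hν : bimatchNum p q G ≤ bimatchNum p q G' + 2 * s)
    (hcard : 8 * #G + 2 * s ≤ 8 * #G' + 16 * r * s) :
    weight p q r G ≤ weight p q r G' + 24 * r ^ 2 * s := by
  have := one_le_weight_coeff hr
  zify at hν hcard
  unfold weight
  nlinarith

theorem weight_le_of_gain (hr : 2 ≤ r) {s : ℕ}
    (hν : bimatchNum p q G + 1 ≤ bimatchNum p q G' + 2 * s)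
    (hcard : 8 * #G + 2 * s + 8 * r ≤ 8 * #G' + 16 * r * s + 12 * r ^ 2 + 1) :
    weight p q r G ≤ weight p q r G' + 24 * r ^ 2 * s := by
  have := one_le_weight_coeff hr
  zify at hν hcard
  unfold weight
  nlinarith

variable [DecidableEq ι] [DecidableEq β] [DecidableEq γ] {t : ℤ} {s : ℕ} {e : ι}

/-- The induction hypothesis for bounding acyclicity by weight: `G` has maximum degree at most `r`
and its proper subgraphs satisfy the weight bound with deficit `t`. -/
structure WeightInduction (p : ι → β) (q : ι → γ) (r : ℕ) (t : ℤ) (G : Finset ι) : Prop where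
  two_le : 2 ≤ r
  degreeLE : DegreeLE p q r G
  certBound : ∀ G' ⊂ G, CertBound (conflictGraph p q) (24 * r ^ 2) G' (weight p q r G' - t)

namespace WeightInduction

theorem one_le (h : WeightInduction p q r t G) : (1 : ℤ) ≤ 24 * r ^ 2 := by
  have := h.two_le
  zify at this
  nlinarith

theorem neutral (h : WeightInduction p q r t G) (hG' : G' ⊂ G)
    (hν : bimatchNum p q G ≤ bimatchNum p q G' + 2 * s)
    (hcard : 8 * #G + 2 * s ≤ 8 * #G' + 16 * r * s) :
    CertBound (conflictGraph p q) (24 * r ^ 2) G' (weight p q r G - t - 24 * r ^ 2 * s) :=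
  (h.certBound G' hG').mono (by linarith [weight_le_of_neutral h.two_le hν hcard])

theorem gain (h : WeightInduction p q r t G) (hG' : G' ⊂ G)
    (hν : bimatchNum p q G + 1 ≤ bimatchNum p q G' + 2 * s)
    (hcard : 8 * #G + 2 * s + 8 * r ≤ 8 * #G' + 16 * r * s + 12 * r ^ 2 + 1) :
    CertBound (conflictGraph p q) (24 * r ^ 2) G' (weight p q r G - t - 24 * r ^ 2 * s) :=
  (h.certBound G' hG').mono (by linarith [weight_le_of_gain h.two_le hν hcard])

theorem neutral_one (h : WeightInduction p q r t G) (hG' : G' ⊂ G)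
    (hν : bimatchNum p q G ≤ bimatchNum p q G' + 2) (hcard : #G + 1 ≤ #G' + 2 * r) :
    CertBound (conflictGraph p q) (24 * r ^ 2) G' (weight p q r G - t - 24 * r ^ 2) := by
  simpa using h.neutral (s := 1) hG' hν (by omega)

theorem neutral_edge (h : WeightInduction p q r t G) {f : ι} (hf : f ∈ G) (hp : p e = p f) :
    CertBound (conflictGraph p q) (24 * r ^ 2) (deleteVerts p q G {p e} {q f})
      (weight p q r G - t - 24 * r ^ 2) :=
  h.neutral_one (deleteVerts_ssubset hf (by simp))
    (by simpa using bimatchNum_le_deleteVerts G {p e} {q f})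
    (hp ▸ h.degreeLE.card_deleteVerts_edge hf rfl)

theorem gain_one (h : WeightInduction p q r t G) (hG' : G' ⊂ G)
    (hν : bimatchNum p q G ≤ bimatchNum p q G' + 1) (hcard : #G ≤ #G' + 3 * r) :
    CertBound (conflictGraph p q) (24 * r ^ 2) G' (weight p q r G - t - 24 * r ^ 2) := by
  have := h.two_le
  have hcost : 8 * #G + 2 * 1 + 8 * r ≤ 8 * #G' + 16 * r * 1 + 12 * r ^ 2 + 1 := by
    zify at *
    nlinarith
  simpa using h.gain (s := 1) hG' (by omega) hcost

end WeightInduction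

end Weight

section Devouring

variable {ι β γ : Type*} [DecidableEq β] [DecidableEq γ] {p : ι → β} {q : ι → γ} {r s u v : ℕ}
  {t : ℤ} {G : Finset ι} {T Z Z' : Finset γ} {Y Y' : Finset β}

/-- A stage in the process of taking links that eventually isolates the right vertices `T`. After
`s` links the deleted vertices are `Y` and `Z`, and the matching number has dropped by exactly
`2 * s`; `u` counts the links taken at pairs of left vertices, each of which costs about `r` edges
more than average. -/
structure Devouring (p : ι → β) (q : ι → γ) (r : ℕ) (G : Finset ι) (T : Finset γ) (Y : Finset β)
    (Z : Finset γ) (s u : ℕ) : Prop where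
  left_subset : Y ⊆ nbhd p q G T
  right_subset : Z ⊆ nbhd q p G (nbhd p q G T)
  card_le : #T ≤ 7 * #(Z \ T)
  ssubset : deleteVerts p q G Y Z ⊂ G
  bimatchNum_eq : bimatchNum p q G = bimatchNum p q (deleteVerts p q G Y Z) + 2 * s
  cost : 8 * #G + 2 * s + 14 * (1 + u) ≤
    8 * #(deleteVerts p q G Y Z) + 16 * r * s + 8 * r * (1 + u)
  budget : 6 * (u + #(nbhd p q G T \ Y)) + 14 < 8 * r

namespace Devouring

/-- Once `T` is isolated, `T` and `Z \ T` are disjoint from the right vertices left, so `s` links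
account for the loss of `#T + #(Z \ T)` saturated right vertices. -/
theorem certBound_of_isolated [DecidableEq ι] (d : Devouring p q r G T Y Z s u)
    (ih : WeightInduction p q r t G) (hsat : RightSaturated p q G) (hT : T ⊆ G.image q)
    (hN : #(nbhd p q G T) ≤ #T) (hiso : ∀ g ∈ deleteVerts p q G Y Z, q g ∉ T) :
    CertBound (conflictGraph p q) (24 * r ^ 2) (deleteVerts p q G Y Z)
      (weight p q r G - t - 24 * r ^ 2 * s) := by
  refine ih.neutral d.ssubset d.bimatchNum_eq.le ?_
  have hν := d.bimatchNum_eq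
  set rest := deleteVerts p q G Y Z
  have hlinks : #T + #(Z \ T) ≤ 2 * s := by
    have hcover : rest.image q ∪ (T ∪ Z \ T) ⊆ G.image q := by
      refine union_subset (image_subset_image deleteVerts_subset) (union_subset hT fun z hz => ?_)
      obtain ⟨g, hg, -, rfl⟩ := mem_nbhd.1 (d.right_subset (mem_sdiff.1 hz).1)
      exact mem_image_of_mem q hg
    have hdisj : Disjoint (rest.image q) (T ∪ Z \ T) := by
      simp only [disjoint_left, mem_image, forall_exists_index, and_imp, mem_union, mem_sdiff]
      rintro _ g hg rfl
      exact not_or.2 ⟨hiso g hg, fun h => (mem_deleteVerts.1 hg).2.2 h.1⟩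
    have := card_le_card hcover
    rw [card_union_of_disjoint hdisj, card_union_of_disjoint disjoint_sdiff, ← hsat, hν] at this
    have := bimatchNum_le_card_image_right (p := p) (q := q) rest
    omega
  have hedges : #(Z \ T) ≤ #{g ∈ G | p g ∈ nbhd p q G T ∧ q g ∈ Z \ T} := by
    refine (card_le_card fun z hz => ?_).trans (card_image_le (f := q))
    obtain ⟨g, hg, hpg, rfl⟩ := mem_nbhd.1 (d.right_subset (mem_sdiff.1 hz).1)
    exact mem_image_of_mem q (mem_filter.2 ⟨hg, hpg, hz⟩)
  have hdel : deleteVerts p q G (nbhd p q G T) (Z \ T) ⊆ rest := by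
    intro g hg
    obtain ⟨hgG, hpg, hqg⟩ := mem_deleteVerts.1 hg
    refine mem_deleteVerts.2 ⟨hgG, fun h => hpg (d.left_subset h), fun h => ?_⟩
    exact hqg (mem_sdiff.2 ⟨h, fun hT' => hpg (mem_nbhd_of_mem hgG hT')⟩)
  have hcard := ih.degreeLE.card_add_card_le hdel fun g hg => mem_filter.1 hg
  have := Nat.mul_le_mul_right r hN
  have := d.card_le
  have := ih.two_le
  zify at *
  nlinarith

theorem step (d : Devouring p q r G T Y Z s u) (hY : Y' ⊆ nbhd p q G T)
    (hZ : Z' ⊆ nbhd q p G (nbhd p q G T))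
    (hss : deleteVerts p q (deleteVerts p q G Y Z) Y' Z' ⊂ deleteVerts p q G Y Z)
    (hν : bimatchNum p q (deleteVerts p q G Y Z) =
      bimatchNum p q (deleteVerts p q (deleteVerts p q G Y Z) Y' Z') + 2)
    (hcost : 8 * #(deleteVerts p q G Y Z) + 2 + 14 * v ≤
      8 * #(deleteVerts p q (deleteVerts p q G Y Z) Y' Z') + 16 * r + 8 * r * v)
    (hbudget : v + #(nbhd p q G T \ (Y' ∪ Y)) ≤ #(nbhd p q G T \ Y)) :
    Devouring p q r G T (Y' ∪ Y) (Z' ∪ Z) (s + 1) (u + v) := by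
  obtain ⟨hleft, hright, hcard, hss', hν', hcost', hbudget'⟩ := d
  refine ⟨union_subset hY hleft, union_subset hZ hright, ?_, ?_, ?_, ?_, by omega⟩
  · refine hcard.trans ?_
    gcongr
    exact subset_union_right
  all_goals rw [← deleteVerts_deleteVerts]
  · exact hss.trans hss'
  · omega
  · zify at *
    nlinarith

/-- If the next link saves a unit of matching number, the saving pays for everything at once;
otherwise the process continues. -/
theorem certBound_of_step [DecidableEq ι] (d : Devouring p q r G T Y Z s u)
    (ih : WeightInduction p q r t G)
    (hstep : Devouring p q r G T (Y' ∪ Y) (Z' ∪ Z) (s + 1) (u + v) →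
      CertBound (conflictGraph p q) (24 * r ^ 2) (deleteVerts p q G (Y' ∪ Y) (Z' ∪ Z))
        (weight p q r G - t - 24 * r ^ 2 * (s + 1 : ℕ)))
    (hY : Y' ⊆ nbhd p q G T) (hZ : Z' ⊆ nbhd q p G (nbhd p q G T))
    (hss : deleteVerts p q (deleteVerts p q G Y Z) Y' Z' ⊂ deleteVerts p q G Y Z)
    (hν : bimatchNum p q (deleteVerts p q G Y Z) ≤
      bimatchNum p q (deleteVerts p q (deleteVerts p q G Y Z) Y' Z') + 2)
    (hcost : 8 * #(deleteVerts p q G Y Z) + 2 + 14 * v ≤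
      8 * #(deleteVerts p q (deleteVerts p q G Y Z) Y' Z') + 16 * r + 8 * r * v)
    (hbudget : v + #(nbhd p q G T \ (Y' ∪ Y)) ≤ #(nbhd p q G T \ Y)) :
    CertBound (conflictGraph p q) (24 * r ^ 2) (deleteVerts p q (deleteVerts p q G Y Z) Y' Z')
      (weight p q r G - t - 24 * r ^ 2 * s - 24 * r ^ 2) := by
  have hX : weight p q r G - t - 24 * r ^ 2 * s - 24 * r ^ 2 =
      weight p q r G - t - 24 * r ^ 2 * (s + 1 : ℕ) := by push_cast; ring
  rw [hX]
  rcases hν.lt_or_eq with hlt | heq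
  · obtain ⟨-, -, -, hss', hν', hcost', hbudget'⟩ := d
    refine ih.gain (hss.trans hss') (by omega) ?_
    have hu : 6 * (u + v) + 14 < 8 * r := by omega
    zify at *
    nlinarith [mul_nonneg (show (0 : ℤ) ≤ 8 * r - 14 by linarith)
      (show (0 : ℤ) ≤ 8 * r - 14 - 6 * (u + v) by linarith)]
  · rw [deleteVerts_deleteVerts]
    exact hstep (d.step hY hZ hss heq hcost hbudget)

theorem certBound [DecidableEq ι] (ih : WeightInduction p q r t G) (hsat : RightSaturated p q G)
    (hT : T ⊆ G.image q) (hN : #(nbhd p q G T) ≤ #T) (d : Devouring p q r G T Y Z s u) :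
    CertBound (conflictGraph p q) (24 * r ^ 2) (deleteVerts p q G Y Z)
      (weight p q r G - t - 24 * r ^ 2 * s) := by
  generalize hR : deleteVerts p q G Y Z = R
  induction R using Finset.strongInduction generalizing Y Z s u with | H R hrec => ?_
  subst hR
  by_cases hiso : ∀ g ∈ deleteVerts p q G Y Z, q g ∉ T
  · exact d.certBound_of_isolated ih hsat hT hN hiso
  push Not at hiso
  obtain ⟨g, hg, hgT⟩ := hiso
  set rest := deleteVerts p q G Y Z
  have hdeg : DegreeLE p q r rest := ih.degreeLE.mono deleteVerts_subset
  have hsub : rest ⊆ G := deleteVerts_subset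
  obtain ⟨M, hM, e, heM, heg⟩ := exists_isMaxBimatching_mem_right (p := p) (q := q) hg
  have he := hM.subset heM
  have hnbr {f : ι} (hf : f ∈ rest) (hfe : q f = q e) : p f ∈ nbhd p q G T :=
    mem_nbhd_of_mem (hsub hf) (hfe ▸ heg ▸ hgT)
  have hnext {Y' : Finset β} {Z' : Finset γ} (hss : deleteVerts p q rest Y' Z' ⊂ rest) :
      deleteVerts p q G (Y' ∪ Y) (Z' ∪ Z) ⊂ rest := by rwa [← deleteVerts_deleteVerts]
  refine CertBound.of_edge ih.one_le he (fun f hf hpf => ?_) fun f hf hqf hpf => ?_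
  · have hss : deleteVerts p q rest {p e} {q f} ⊂ rest := deleteVerts_ssubset he (by simp)
    refine d.certBound_of_step (v := 0) ih (fun d' => hrec _ (hnext hss) d' rfl) ?_ ?_ hss ?_ ?_ ?_
    · simpa using hnbr he rfl
    · simpa using mem_nbhd_of_mem (hsub hf) (hpf ▸ hnbr he rfl)
    · simpa using bimatchNum_le_deleteVerts rest {p e} {q f}
    · have := hdeg.card_deleteVerts_edge hf hpf.symm
      simp only [rest] at this
      omega
    · rw [zero_add]
      gcongr
      exact subset_union_right
  · have hss : deleteVerts p q rest {p e, p f} {q e} ⊂ rest := deleteVerts_ssubset he (by simp)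
    refine d.certBound_of_step (v := 1) ih (fun d' => hrec _ (hnext hss) d' rfl) ?_ ?_ hss
      (hM.bimatchNum_le_deleteVerts_pair heM _) ?_ ?_
    · simpa [insert_subset_iff] using ⟨hnbr he rfl, hnbr hf hqf⟩
    · simpa using mem_nbhd_of_mem (hsub he) (hnbr he rfl)
    · have := hdeg.card_deleteVerts_pair he hf hqf hpf
      simp only [rest] at this
      omega
    · rw [add_comm, Nat.add_one_le_iff]
      refine card_lt_card ((ssubset_iff_of_subset (by gcongr; exact subset_union_right)).2
        ⟨p e, ?_, by simp⟩)
      exact mem_sdiff.2 ⟨hnbr he rfl, (mem_deleteVerts.1 he).2.1⟩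

end Devouring

end Devouring

section Chase

variable {ι β γ : Type*} [DecidableEq ι] [DecidableEq β] [DecidableEq γ] {p : ι → β} {q : ι → γ}
  {r : ℕ} {t : ℤ} {G F : Finset ι} {I Y : Finset γ} {e f : ι}

/-- A nonempty set of right vertices whose neighbourhood exceeds it by at most one. -/
structure NearTight (p : ι → β) (q : ι → γ) (G : Finset ι) (Y : Finset γ) : Prop where
  subset : Y ⊆ G.image q
  nonempty : Y.Nonempty
  card_nbhd_le : #(nbhd p q G Y) ≤ #Y + 1

/-- The multigraph left after deleting the left ends of `e`, `f` and `F` and the right ends of `e`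
and `F`. -/
def chaseRest (p : ι → β) (q : ι → γ) (G : Finset ι) (e f : ι) (F : Finset ι) : Finset ι :=
  deleteVerts p q G ((insert f (insert e F)).image p) ((insert e F).image q)

theorem chaseRest_ssubset (he : e ∈ G) : chaseRest p q G e f F ⊂ G :=
  deleteVerts_ssubset he (by simp)

theorem chaseRest_empty :
    chaseRest p q G e f ∅ = deleteVerts p q G {p e, p f} {q e} := by
  simp [chaseRest, pair_comm]

theorem chaseRest_insert (d : ι) :
    chaseRest p q G e f (insert d F) = deleteVerts p q (chaseRest p q G e f F) {p d} {q d} := by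
  ext g
  simp only [chaseRest, mem_deleteVerts, image_insert, mem_insert, mem_singleton]
  tauto

/-- A stage of a chase: after the link at the pair of edges `e`, `f` with a common right end, the
links at the edges of the matching `F` have been taken, each lowering the matching number by two
and each passing through a left vertex adjacent to a right vertex that is now inessential. -/
structure Chase (p : ι → β) (q : ι → γ) (r : ℕ) (G : Finset ι) (e f : ι) (F : Finset ι) :
    Prop where
  subset : F ⊆ G
  isBimatching : IsBimatching p q F
  ne : ∀ d ∈ F, p d ≠ p e ∧ p d ≠ p f ∧ q d ≠ q e
  exists_isInessential : ∀ d ∈ F, ∃ g ∈ G, p g = p d ∧ q g ∉ (insert e F).image q ∧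
    IsInessential p q (chaseRest p q G e f F) (q g)
  bimatchNum_eq : bimatchNum p q G = bimatchNum p q (chaseRest p q G e f F) + 2 * (#F + 1)
  cost : #G + 2 + #F ≤ #(chaseRest p q G e f F) + 3 * r + 2 * r * #F

/-- The right vertices `I` are isolated by the deletions of a chase, and there are more of them than
edges in `F`. -/
structure IsTrapped (p : ι → β) (q : ι → γ) (G : Finset ι) (e f : ι) (F : Finset ι)
    (I : Finset γ) : Prop where
  subset : I ⊆ G.image q
  card_eq : #I = #F + 1
  nbhd_subset : nbhd p q G I ⊆ (insert f (insert e F)).image p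
  image_subset : F.image p ⊆ nbhd p q G I
  disjoint : Disjoint ((insert e F).image q) I

namespace Chase

theorem card_image_right (h : Chase p q r G e f F) : #((insert e F).image q) = #F + 1 := by
  rw [image_insert, card_insert_of_notMem, card_image_of_injOn h.isBimatching.2]
  rw [mem_image]
  exact fun ⟨d, hd, hq⟩ => (h.ne d hd).2.2 hq

theorem card_image_left (h : Chase p q r G e f F) (hp : p f ≠ p e) :
    #((insert f (insert e F)).image p) = #F + 2 := by
  rw [image_insert, image_insert, card_insert_of_notMem, card_insert_of_notMem,
    card_image_of_injOn h.isBimatching.1]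
  · rw [mem_image]
    exact fun ⟨d, hd, hpd⟩ => (h.ne d hd).1 hpd
  · rw [mem_insert, mem_image]
    exact not_or.2 ⟨hp, fun ⟨d, hd, hpd⟩ => (h.ne d hd).2.1 hpd⟩

theorem exists_isTrapped (h : Chase p q r G e f F) (he : e ∈ G) (hsat : RightSaturated p q G)
    (hrest : RightSaturated p q (chaseRest p q G e f F)) : ∃ I, IsTrapped p q G e f F I := by
  have hC : (insert e F).image q ⊆ G.image q :=
    image_subset_image (insert_subset he h.subset)
  have hR : (chaseRest p q G e f F).image q ⊆ G.image q \ (insert e F).image q := by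
    intro z hz
    obtain ⟨g, hg, rfl⟩ := mem_image.1 hz
    exact mem_sdiff.2 ⟨mem_image_of_mem q (deleteVerts_subset hg), (mem_deleteVerts.1 hg).2.2⟩
  refine ⟨(G.image q \ (insert e F).image q) \ (chaseRest p q G e f F).image q,
    sdiff_subset.trans sdiff_subset, ?_, fun y hy => ?_, fun y hy => ?_, ?_⟩
  · have := h.bimatchNum_eq
    rw [card_sdiff_of_subset hR, card_sdiff_of_subset hC, h.card_image_right, ← hsat, ← hrest]
    omega
  · obtain ⟨g, hg, hgI, rfl⟩ := mem_nbhd.1 hy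
    by_contra hcon
    obtain ⟨hgC, hgR⟩ := mem_sdiff.1 hgI
    exact hgR (mem_image_of_mem q (mem_deleteVerts.2 ⟨hg, hcon, (mem_sdiff.1 hgC).2⟩))
  · obtain ⟨d, hd, rfl⟩ := mem_image.1 hy
    obtain ⟨g, hg, hpg, hgC, hiness⟩ := h.exists_isInessential d hd
    exact mem_nbhd.2 ⟨g, hg, mem_sdiff.2 ⟨mem_sdiff.2 ⟨mem_image_of_mem q hg, hgC⟩,
      fun hgR => hrest.not_isInessential hgR hiness⟩, hpg⟩
  · exact disjoint_sdiff.mono_right sdiff_subset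

end Chase

namespace IsTrapped

theorem nearTight (hI : IsTrapped p q G e f F I) : NearTight p q G I := by
  refine ⟨hI.subset, card_pos.1 (by have := hI.card_eq; omega), ?_⟩
  calc #(nbhd p q G I) ≤ #((insert f (insert e F)).image p) := card_le_card hI.nbhd_subset
    _ ≤ #(insert f (insert e F)) := card_image_le
    _ ≤ #F + 1 + 1 := (card_insert_le _ _).trans (by gcongr; exact card_insert_le _ _)
    _ = #I + 1 := by rw [hI.card_eq]

theorem image_left_subset (hI : IsTrapped p q G e f F I) (he : e ∈ G) (hf : f ∈ G)
    (hq : q f = q e) (heY : q e ∈ Y) :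
    (insert f (insert e F)).image p ⊆ nbhd p q G (Y ∪ I) := by
  rw [image_insert, image_insert, nbhd_union]
  exact insert_subset (mem_union_left _ (mem_nbhd_of_mem hf (hq ▸ heY)))
    (insert_subset (mem_union_left _ (mem_nbhd_of_mem he heY))
      (hI.image_subset.trans subset_union_right))

theorem card_nbhd_union_le (hI : IsTrapped p q G e f F I) (hF : F ⊆ G) (he : e ∈ G) (hf : f ∈ G)
    (hq : q f = q e) (heY : q e ∈ Y) :
    #(nbhd p q G (Y ∪ I)) ≤ #(nbhd p q G Y) + #{d ∈ F | q d ∉ Y} := by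
  have hcover : nbhd p q G (Y ∪ I) ⊆ nbhd p q G Y ∪ {d ∈ F | q d ∉ Y}.image p := by
    rw [nbhd_union]
    refine union_subset subset_union_left fun y hy => ?_
    obtain ⟨d, hd, rfl⟩ := mem_image.1 (hI.nbhd_subset hy)
    by_cases hdY : q d ∈ Y
    · have hdG : d ∈ G := by grind
      exact mem_union_left _ (mem_nbhd_of_mem hdG hdY)
    · have hdF : d ∈ F := by grind
      exact mem_union_right _ (mem_image_of_mem p (mem_filter.2 ⟨hdF, hdY⟩))
  exact (card_le_card hcover).trans ((card_union_le _ _).trans (by gcongr; exact card_image_le))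

/-- Submodularity of `#(nbhd p q G Z) - #Z`: the value at `Y ∩ I` is at least two by minimality of
`Y`, or else `Y` and `I` are disjoint while their neighbourhoods overlap. -/
theorem card_nbhd_union_le_card (hI : IsTrapped p q G e f F I) (hF : F ⊆ G) (he : e ∈ G)
    (hf : f ∈ G) (hq : q f = q e) (hY : MinimalFor (NearTight p q G) card Y) (heY : q e ∈ Y) :
    #(nbhd p q G (Y ∪ I)) ≤ #(Y ∪ I) := by
  have hYtight := hY.1.card_nbhd_le
  have hcard := card_union_add_card_inter Y I
  rcases (Y ∩ I).eq_empty_or_nonempty with hdisj | hne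
  · have := hI.card_nbhd_union_le hF he hf hq heY
    have := card_filter_le F fun d => q d ∉ Y
    have := hI.card_eq
    rw [hdisj, card_empty] at hcard
    omega
  · have heI : q e ∉ I :=
      disjoint_left.1 hI.disjoint (mem_image_of_mem q (mem_insert_self e F))
    have hlt : #(Y ∩ I) < #Y :=
      card_lt_card ((ssubset_iff_of_subset inter_subset_left).2 ⟨q e, heY, by simp [heI]⟩)
    have hinter : #(Y ∩ I) + 1 < #(nbhd p q G (Y ∩ I)) := by
      by_contra hcon
      have := hY.2 ⟨inter_subset_left.trans hY.1.subset, hne, not_lt.1 hcon⟩ hlt.le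
      omega
    have hsub : nbhd p q G (Y ∩ I) ⊆ nbhd p q G Y ∩ nbhd p q G I :=
      subset_inter (nbhd_mono inter_subset_left) (nbhd_mono inter_subset_right)
    have := card_le_card hsub
    have := card_union_add_card_inter (nbhd p q G Y) (nbhd p q G I)
    have := hI.nearTight.card_nbhd_le
    rw [nbhd_union]
    omega

theorem card_union_le_seven_mul (hI : IsTrapped p q G e f F I) (hF : F ⊆ G)
    (hinj : Set.InjOn q (insert e F : Finset ι)) (heF : e ∉ F) (hne : F.Nonempty)
    (hsat : RightSaturated p q G) (he : e ∈ G) (hf : f ∈ G) (hq : q f = q e)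
    (hY : MinimalFor (NearTight p q G) card Y) (heY : q e ∈ Y) :
    #(Y ∪ I) ≤ 7 * #((insert e F).image q \ (Y ∪ I)) := by
  have hYI : #Y ≤ #I := (le_total _ _).elim id (hY.2 hI.nearTight)
  have hhall : #{d ∈ F | q d ∈ Y} ≤ #(Y ∩ I) := by
    have := hsat.card_le_card_nbhd (union_subset hY.1.subset hI.subset)
    have := hI.card_nbhd_union_le hF he hf hq heY
    have := hY.1.card_nbhd_le
    have := card_union_add_card_inter Y I
    have := card_filter_add_card_filter_not (s := F) fun d => q d ∈ Y
    have := hI.card_eq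
    omega
  have hinside : #{d ∈ F | q d ∈ Y} + 1 + #(Y ∩ I) ≤ #Y := by
    have hsub : {d ∈ insert e F | q d ∈ Y}.image q ∪ (Y ∩ I) ⊆ Y := by
      refine union_subset (fun z hz => ?_) inter_subset_left
      obtain ⟨d, hd, rfl⟩ := mem_image.1 hz
      exact (mem_filter.1 hd).2
    have hdisj : Disjoint ({d ∈ insert e F | q d ∈ Y}.image q) (Y ∩ I) :=
      hI.disjoint.mono (image_subset_image (filter_subset _ _)) inter_subset_right
    have := card_le_card hsub
    rwa [card_union_of_disjoint hdisj,
      card_image_of_injOn (hinj.mono (coe_subset.2 (filter_subset _ _))), filter_insert,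
      if_pos heY, card_insert_of_notMem fun h => heF (mem_filter.1 h).1] at this
  have houtside : #{d ∈ F | q d ∉ Y} ≤ #((insert e F).image q \ (Y ∪ I)) := by
    have hsub : {d ∈ F | q d ∉ Y} ⊆ insert e F := (filter_subset _ _).trans (subset_insert e F)
    rw [← card_image_of_injOn (hinj.mono (coe_subset.2 hsub))]
    refine card_le_card fun z hz => ?_
    obtain ⟨d, hd, rfl⟩ := mem_image.1 hz
    have hdC := mem_image_of_mem q (hsub hd)
    exact mem_sdiff.2 ⟨hdC, notMem_union.2 ⟨(mem_filter.1 hd).2, disjoint_left.1 hI.disjoint hdC⟩⟩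
  have := card_filter_add_card_filter_not (s := F) fun d => q d ∈ Y
  have := card_union_add_card_inter Y I
  have := hI.card_eq
  have := card_pos.2 hne
  omega

/-- Without twins, the minimal near-tight set and the trapped set together see a third left vertex,
so the chase has removed some edge. -/
theorem nonempty (hI : IsTrapped p q G e f F I) (he : e ∈ G) (hf : f ∈ G) (hq : q f = q e)
    (hY : MinimalFor (NearTight p q G) card Y) (heY : q e ∈ Y)
    (htwin : ∀ z ∈ G.image q, ∀ z' ∈ G.image q, z ≠ z' → 3 ≤ #(nbhd p q G {z, z'})) :
    F.Nonempty := by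
  rw [nonempty_iff_ne_empty]
  rintro rfl
  have hYI : #Y ≤ #I := (le_total _ _).elim id (hY.2 hI.nearTight)
  obtain ⟨z, rfl⟩ := card_eq_one.1 hI.card_eq
  obtain rfl : {q e} = Y :=
    eq_of_subset_of_card_le (singleton_subset_iff.2 heY) (by simpa using hYI)
  have hez : q e ≠ z := by simpa using hI.disjoint
  have hthree := htwin (q e) (mem_image_of_mem q he) z (hI.subset (mem_singleton_self z)) hez
  have hnbhd := hI.card_nbhd_union_le (empty_subset G) he hf hq heY
  have := hY.1.card_nbhd_le
  rw [← insert_eq] at hnbhd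
  simp only [filter_empty, card_empty, card_singleton] at *
  omega

end IsTrapped

end Chase

section ChaseBound

variable {ι β γ : Type*} [DecidableEq β] [DecidableEq γ] {p : ι → β} {q : ι → γ}
  {r : ℕ} {t : ℤ} {G F : Finset ι} {e f : ι}

/-- An edge whose deletion costs two units of the matching number meets every maximum matching
twice, so it can be avoided together with `z`. -/
theorem IsInessential.deleteVerts_edge {z : γ} {d : ι} (h : IsInessential p q G z)
    (hdrop : bimatchNum p q (deleteVerts p q G {p d} {q d}) + 2 ≤ bimatchNum p q G) :
    IsInessential p q (deleteVerts p q G {p d} {q d}) z := by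
  obtain ⟨M, hM, hMz⟩ := h
  have hsub : deleteVerts p q M {p d} {q d} ⊆ deleteVerts p q G {p d} {q d} :=
    deleteVerts_mono hM.subset
  have hbi : IsBimatching p q (deleteVerts p q M {p d} {q d}) :=
    hM.isBimatching.mono deleteVerts_subset
  refine ⟨_, ⟨hsub, hbi, (hbi.card_le_bimatchNum hsub).antisymm ?_⟩,
    fun g hg => hMz g (deleteVerts_subset hg)⟩
  have := hM.isBimatching.card_le_deleteVerts {p d} {q d}
  rw [hM.card_eq, card_singleton, card_singleton] at this
  omega

theorem exists_minimalFor_nearTight (hG : G.Nonempty) : ∃ z ∈ G.image q, ∀ I, NearTight p q G I →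
    ∃ Y, MinimalFor (NearTight p q G) card Y ∧ z ∈ Y := by
  by_cases hex : ∃ I, NearTight p q G I
  · obtain ⟨Y, hY⟩ := exists_minimalFor_of_wellFoundedLT (NearTight p q G) card hex
    obtain ⟨z, hz⟩ := hY.1.nonempty
    exact ⟨z, hY.1.subset hz, fun _ _ => ⟨Y, hY, hz⟩⟩
  · obtain ⟨g, hg⟩ := hG
    exact ⟨q g, mem_image_of_mem q hg, fun I hI => absurd ⟨I, hI⟩ hex⟩

variable [DecidableEq ι]

namespace Chase

theorem devouring {I Y : Finset γ} (h : Chase p q r G e f F) (hI : IsTrapped p q G e f F I)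
    (hsat : RightSaturated p q G) (he : e ∈ G) (hf : f ∈ G) (hq : q f = q e) (hp : p f ≠ p e)
    (hY : MinimalFor (NearTight p q G) card Y) (heY : q e ∈ Y)
    (htwin : ∀ z ∈ G.image q, ∀ z' ∈ G.image q, z ≠ z' → 3 ≤ #(nbhd p q G {z, z'}))
    (hbudget : 6 * #F + 14 < 8 * r) :
    Devouring p q r G (Y ∪ I) ((insert f (insert e F)).image p) ((insert e F).image q)
      (#F + 1) 0 := by
  have heF : e ∉ F := fun heF => (h.ne e heF).1 rfl
  have hleft := hI.image_left_subset he hf hq heY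
  have hinj : Set.InjOn q (insert e F : Finset ι) := by
    rw [← card_image_iff, h.card_image_right, card_insert_of_notMem heF]
  refine ⟨hleft, fun z hz => ?_, hI.card_union_le_seven_mul h.subset hinj heF
    (hI.nonempty he hf hq hY heY htwin) hsat he hf hq hY heY, chaseRest_ssubset he,
    h.bimatchNum_eq, ?_, ?_⟩
  · obtain ⟨d, hd, rfl⟩ := mem_image.1 hz
    exact mem_nbhd_of_mem (insert_subset he h.subset hd)
      (hleft (mem_image_of_mem p (mem_insert_of_mem hd)))
  · have := h.cost
    rw [chaseRest] at this
    zify at *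
    nlinarith
  · have hYI : #Y ≤ #I := (le_total _ _).elim id (hY.2 hI.nearTight)
    have := card_union_le Y I
    have := hI.card_nbhd_union_le_card h.subset he hf hq hY heY
    have := hI.card_eq
    rw [card_sdiff_of_subset hleft, h.card_image_left hp]
    omega

theorem certBound_of_rightSaturated (h : Chase p q r G e f F) (ih : WeightInduction p q r t G)
    (hsat : RightSaturated p q G) (he : e ∈ G) (hf : f ∈ G) (hq : q f = q e) (hp : p f ≠ p e)
    (hmin : ∀ I, NearTight p q G I → ∃ Y, MinimalFor (NearTight p q G) card Y ∧ q e ∈ Y)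
    (htwin : ∀ z ∈ G.image q, ∀ z' ∈ G.image q, z ≠ z' → 3 ≤ #(nbhd p q G {z, z'}))
    (hrest : RightSaturated p q (chaseRest p q G e f F)) :
    CertBound (conflictGraph p q) (24 * r ^ 2) (chaseRest p q G e f F)
      (weight p q r G - t - 24 * r ^ 2 * (#F + 1 : ℕ)) := by
  rcases le_or_gt (8 * r) (6 * #F + 14) with hlong | hshort
  · refine ih.neutral (chaseRest_ssubset he) h.bimatchNum_eq.le ?_
    have := h.cost
    zify at *
    nlinarith
  · obtain ⟨I, hI⟩ := h.exists_isTrapped he hsat hrest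
    obtain ⟨Y, hY, heY⟩ := hmin I hI.nearTight
    exact (h.devouring hI hsat he hf hq hp hY heY htwin hshort).certBound ih hsat
      (union_subset hY.1.subset hI.subset)
      (hI.card_nbhd_union_le_card h.subset he hf hq hY heY)

theorem insert {g d : ι} (h : Chase p q r G e f F) (hdeg : DegreeLE p q r G)
    (hg : g ∈ chaseRest p q G e f F) (hd : d ∈ chaseRest p q G e f F) (hpd : p d = p g)
    (hgi : IsInessential p q (chaseRest p q G e f F) (q g))
    (hdi : ¬ IsInessential p q (chaseRest p q G e f F) (q d))
    (hdrop : bimatchNum p q (deleteVerts p q (chaseRest p q G e f F) {p d} {q d}) + 2 ≤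
      bimatchNum p q (chaseRest p q G e f F)) :
    Chase p q r G e f (insert d F) := by
  have hdG := mem_deleteVerts.1 hd
  have hgG := mem_deleteVerts.1 hg
  simp only [image_insert, mem_insert, mem_image, not_or, not_exists, not_and] at hdG hgG
  have hdF : d ∉ F := fun hdF => hdG.2.1.2.2 d hdF rfl
  have hiness {z : γ} (hz : IsInessential p q (chaseRest p q G e f F) z) :
      z ≠ q d ∧ IsInessential p q (chaseRest p q G e f (Insert.insert d F)) z := by
    rw [chaseRest_insert]
    exact ⟨fun hzd => hdi (hzd ▸ hz), hz.deleteVerts_edge hdrop⟩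
  refine ⟨insert_subset hdG.1 h.subset, h.isBimatching.insert ?_, fun x hx => ?_, fun x hx => ?_,
    ?_, ?_⟩
  · exact fun x hx => ⟨hdG.2.1.2.2 x hx, hdG.2.2.2 x hx⟩
  · rcases mem_insert.1 hx with rfl | hx
    · exact ⟨hdG.2.1.2.1, hdG.2.1.1, hdG.2.2.1⟩
    · exact h.ne x hx
  · rw [Finset.insert_comm, image_insert]
    rcases mem_insert.1 hx with rfl | hx
    · refine ⟨g, hgG.1, hpd.symm, ?_, (hiness hgi).2⟩
      exact mem_insert.not.2 (not_or.2 ⟨(hiness hgi).1, (mem_deleteVerts.1 hg).2.2⟩)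
    · obtain ⟨y, hy, hpy, hqy, hyi⟩ := h.exists_isInessential x hx
      exact ⟨y, hy, hpy, mem_insert.not.2 (not_or.2 ⟨(hiness hyi).1, hqy⟩), (hiness hyi).2⟩
  · have := bimatchNum_le_deleteVerts (p := p) (q := q) (chaseRest p q G e f F) {p d} {q d}
    have := h.bimatchNum_eq
    simp only [card_singleton] at *
    rw [chaseRest_insert, card_insert_of_notMem hdF]
    omega
  · have hdeg' : DegreeLE p q r (chaseRest p q G e f F) := hdeg.mono deleteVerts_subset
    have := hdeg'.card_deleteVerts_edge hd (f := d) rfl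
    have := h.cost
    rw [chaseRest_insert, card_insert_of_notMem hdF, mul_add]
    omega

/-- A chase goes on for as long as there are inessential right vertices. -/
theorem certBound (ih : WeightInduction p q r t G)
    (hsat : RightSaturated p q G) (he : e ∈ G) (hf : f ∈ G) (hq : q f = q e) (hp : p f ≠ p e)
    (hmin : ∀ I, NearTight p q G I → ∃ Y, MinimalFor (NearTight p q G) card Y ∧ q e ∈ Y)
    (htwin : ∀ z ∈ G.image q, ∀ z' ∈ G.image q, z ≠ z' → 3 ≤ #(nbhd p q G {z, z'}))
    (h : Chase p q r G e f F) :
    CertBound (conflictGraph p q) (24 * r ^ 2) (chaseRest p q G e f F)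
      (weight p q r G - t - 24 * r ^ 2 * (#F + 1 : ℕ)) := by
  generalize hR : chaseRest p q G e f F = R
  induction R using Finset.strongInduction generalizing F with | H R hrec => ?_
  by_cases hrest : RightSaturated p q R
  · exact hR ▸ h.certBound_of_rightSaturated ih hsat he hf hq hp hmin htwin (hR ▸ hrest)
  obtain ⟨g, hg, hgi⟩ := exists_isInessential_of_not_rightSaturated hrest
  have hss : R ⊂ G := hR ▸ chaseRest_ssubset he
  have hdeg : DegreeLE p q r R := ih.degreeLE.mono hss.1
  have hX : weight p q r G - t - 24 * r ^ 2 * (#F + 1 : ℕ) - 24 * r ^ 2 =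
      weight p q r G - t - 24 * r ^ 2 * (#F + 2 : ℕ) := by push_cast; ring
  have gain (H : Finset ι) (hH : H ⊂ R) (hν : bimatchNum p q R ≤ bimatchNum p q H + 1)
      (hcard : #R ≤ #H + 3 * r) : CertBound (conflictGraph p q) (24 * r ^ 2) H
        (weight p q r G - t - 24 * r ^ 2 * (#F + 1 : ℕ) - 24 * r ^ 2) := by
    have hbi := h.bimatchNum_eq
    have hcost := h.cost
    have := ih.two_le
    rw [hR] at hbi hcost
    rw [hX]
    refine ih.gain (hH.trans hss) (by omega) ?_
    zify at *
    nlinarith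
  refine CertBound.of_inessential ih.one_le hdeg hg hgi gain fun d hd hpd hdi => ?_
  have hss' : deleteVerts p q R {p d} {q d} ⊂ R := deleteVerts_ssubset hd (by simp)
  rcases le_or_gt (bimatchNum p q R) (bimatchNum p q (deleteVerts p q R {p d} {q d}) + 1)
    with hgain | hdrop
  · refine gain _ hss' hgain ?_
    have := hdeg.card_deleteVerts_edge hd (f := d) rfl
    omega
  · subst hR
    have hins := h.insert ih.degreeLE hg hd hpd hgi hdi hdrop
    have hdF : d ∉ F := fun hdF => (mem_deleteVerts.1 hd).2.1
      (mem_image_of_mem p (mem_insert_of_mem (mem_insert_of_mem hdF)))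
    have := hrec _ hss' hins (chaseRest_insert d)
    rwa [card_insert_of_notMem hdF, ← hX] at this

end Chase

theorem WeightInduction.certBound_of_no_twins (ih : WeightInduction p q r t G) (hG : G.Nonempty)
    (hsat : RightSaturated p q G)
    (htwin : ∀ z ∈ G.image q, ∀ z' ∈ G.image q, z ≠ z' → 3 ≤ #(nbhd p q G {z, z'})) :
    CertBound (conflictGraph p q) (24 * r ^ 2) G (weight p q r G - t) := by
  obtain ⟨z, hz, hmin⟩ := exists_minimalFor_nearTight (p := p) (q := q) hG
  obtain ⟨g, hg, rfl⟩ := mem_image.1 hz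
  obtain ⟨M, hM, e, heM, heg⟩ := exists_isMaxBimatching_mem_right (p := p) (q := q) hg
  rw [← heg] at hmin
  have he := hM.subset heM
  refine CertBound.of_edge ih.one_le he (fun f hf hpf => ?_) fun f hf hqf hpf => ?_
  · exact ih.neutral_edge hf hpf.symm
  · have hdrop := hM.bimatchNum_le_deleteVerts_pair heM (p f)
    have hcard := ih.degreeLE.card_deleteVerts_pair he hf hqf hpf
    rcases hdrop.lt_or_eq with hlt | heq
    · exact ih.gain_one (deleteVerts_ssubset he (by simp)) (by omega) (by omega)
    · have hchase : Chase p q r G e f ∅ := by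
        refine ⟨empty_subset G, by simp [IsBimatching], by simp, by simp, ?_, ?_⟩ <;>
          rw [chaseRest_empty] <;> simpa
      simpa [chaseRest_empty] using hchase.certBound ih hsat he hf hqf hpf hmin htwin

end ChaseBound

section Twins

variable {ι β γ : Type*} {p : ι → β} {q : ι → γ}
  {r : ℕ} {t : ℤ} {G H : Finset ι} {y y' : β} {z z' : γ}

/-- Two right vertices `z`, `z'` with the same neighbourhood `{y, y'}`. -/
structure Twins (p : ι → β) (q : ι → γ) (G : Finset ι) (y y' : β) (z z' : γ) : Prop where
  left_ne : y ≠ y'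
  right_ne : z ≠ z'
  exists_edge : ∀ x w, (x = y ∨ x = y') → (w = z ∨ w = z') → ∃ g ∈ G, p g = x ∧ q g = w
  closed_right : ∀ g ∈ G, (q g = z ∨ q g = z') → (p g = y ∨ p g = y')

theorem Twins.symm_left (h : Twins p q G y y' z z') : Twins p q G y' y z z' :=
  ⟨h.left_ne.symm, h.right_ne, fun x w hx => h.exists_edge x w hx.symm,
    fun g hg hz => (h.closed_right g hg hz).symm⟩

variable [DecidableEq β] [DecidableEq γ]

/-- The vertices `y, z, y', z'` span an `r`-regular thickened 4-cycle that is a component of `G`. -/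
structure FullFourCycle (p : ι → β) (q : ι → γ) (r : ℕ) (G : Finset ι) (y y' : β) (z z' : γ) : Prop
    extends Twins p q G y y' z z' where
  closed_left : ∀ g ∈ G, (p g = y ∨ p g = y') → (q g = z ∨ q g = z')
  card_left : ∀ x, (x = y ∨ x = y') → #{g ∈ G | p g = x} = r
  card_right : ∀ w, (w = z ∨ w = z') → #{g ∈ G | q g = w} = r

theorem card_filter_eq_or_eq {α δ : Type*} [DecidableEq δ] {f : α → δ} {a b : δ} (hab : a ≠ b)
    (s : Finset α) : #{x ∈ s | f x = a ∨ f x = b} = #{x ∈ s | f x = a} + #{x ∈ s | f x = b} := by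
  classical
  rw [filter_or, card_union_of_disjoint (disjoint_filter.2 fun x _ ha hb => hab (ha.symm.trans hb))]

theorem exists_twins (hz : z ≠ z') (h₁ : 2 ≤ #(nbhd p q G {z})) (h₂ : 2 ≤ #(nbhd p q G {z'}))
    (h₃ : #(nbhd p q G {z, z'}) ≤ 2) : ∃ y y', Twins p q G y y' z z' := by
  have heq : nbhd p q G {z} = nbhd p q G {z, z'} :=
    eq_of_subset_of_card_le (nbhd_mono (by simp)) (by omega)
  have heq' : nbhd p q G {z'} = nbhd p q G {z, z'} :=
    eq_of_subset_of_card_le (nbhd_mono (by simp)) (by omega)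
  obtain ⟨y, y', hy, hyy⟩ := card_eq_two.1 (h₃.antisymm (heq ▸ h₁))
  refine ⟨y, y', hy, hz, fun x w hx hw => ?_, fun g hg hqg => ?_⟩
  · have hxw : x ∈ nbhd p q G {w} := by
      rcases hw with rfl | rfl <;> simp [*]
    obtain ⟨g, hg, hgw, hgx⟩ := mem_nbhd.1 hxw
    exact ⟨g, hg, hgx, mem_singleton.1 hgw⟩
  · have hmem : p g ∈ nbhd p q G {z, z'} := mem_nbhd_of_mem hg (by simpa using hqg)
    simpa only [hyy, mem_insert, mem_singleton] using hmem

theorem Twins.fullFourCycle (h : Twins p q G y y' z z') (hdeg : DegreeLE p q r G)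
    (hclosed : ∀ g ∈ G, (p g = y ∨ p g = y') → (q g = z ∨ q g = z'))
    (hcard : #(deleteVerts p q G {y, y'} ∅) + 2 * r ≤ #G) : FullFourCycle p q r G y y' z z' := by
  have hsplit := card_filter_add_card_filter_not (s := G) (p := fun g => p g = y ∨ p g = y')
  have hdel : deleteVerts p q G {y, y'} ∅ = {g ∈ G | ¬(p g = y ∨ p g = y')} := by
    ext g
    simp [mem_deleteVerts]
  have hsides : {g ∈ G | q g = z ∨ q g = z'} = {g ∈ G | p g = y ∨ p g = y'} :=
    filter_congr fun g hg => ⟨h.closed_right g hg, hclosed g hg⟩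
  have hleft := card_filter_eq_or_eq (f := p) h.left_ne G
  have hright := card_filter_eq_or_eq (f := q) h.right_ne G
  rw [hsides] at hright
  rw [hdel] at hcard
  have := hdeg.left y
  have := hdeg.left y'
  have := hdeg.right z
  have := hdeg.right z'
  refine ⟨h, hclosed, ?_, ?_⟩ <;> rintro x (rfl | rfl) <;> omega

namespace Twins

theorem bimatchNum_le_add_one (h : Twins p q G y y' z z')
    (hdel : deleteVerts p q G {y, y'} {z'} ⊆ H) {x : ι} (hx : x ∈ H) (hpx : p x = y ∨ p x = y')
    (hqx : q x = z ∨ q x = z') : bimatchNum p q G ≤ bimatchNum p q H + 1 := by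
  classical
  obtain ⟨M, hM⟩ := exists_isMaxBimatching p q (deleteVerts p q G {y, y'} ∅)
  have hν := bimatchNum_le_deleteVerts (p := p) (q := q) G {y, y'} ∅
  rw [card_pair h.left_ne, card_empty, ← hM.card_eq] at hν
  have hoff : ∀ g ∈ M, g ∈ G ∧ ¬(p g = y ∨ p g = y') ∧ ¬(q g = z ∨ q g = z') := fun g hg => by
    have hgG := mem_deleteVerts.1 (hM.subset hg)
    have hp : ¬(p g = y ∨ p g = y') := by simpa using hgG.2.1
    exact ⟨hgG.1, hp, mt (h.closed_right g hgG.1) hp⟩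
  have hmatch := (hM.isBimatching.insert (e := x) fun g hg => by grind).card_le_bimatchNum
    (insert_subset hx fun g hg => hdel (mem_deleteVerts.2 (by grind)) : insert x M ⊆ H)
  rw [card_insert_of_notMem fun hxM => (hoff x hxM).2.1 hpx] at hmatch
  omega

variable [DecidableEq ι]

theorem certBound_of_deleteVerts_subset (h : Twins p q G y y' z z')
    (ih : WeightInduction p q r t G) (hH : H ⊂ G) (hdel : deleteVerts p q G {y, y'} {z'} ⊆ H)
    {x : ι} (hx : x ∈ H) (hpx : p x = y ∨ p x = y') (hqx : q x = z ∨ q x = z') :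
    CertBound (conflictGraph p q) (24 * r ^ 2) H (weight p q r G - t - 24 * r ^ 2) := by
  refine ih.gain_one hH (h.bimatchNum_le_add_one hdel hx hpx hqx) ?_
  have := ih.degreeLE.card_le hdel
  rw [card_pair h.left_ne, card_singleton] at this
  omega

theorem certBound_of_keep (h : Twins p q G y y' z z') (ih : WeightInduction p q r t G)
    (hH : H ⊂ G) {f₀ : ι} (hf₀ : f₀ ∈ G) (hp₀ : p f₀ = y) (hqz : q f₀ ≠ z) (hqz' : q f₀ ≠ z')
    (hkeep : ∀ g ∈ G, p g ≠ y' → (p g = y → q g ≠ z ∧ q g ≠ z') → g ∈ H) :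
    CertBound (conflictGraph p q) (24 * r ^ 2) H (weight p q r G - t - 24 * r ^ 2) := by
  refine ih.neutral_one hH ?_ ?_
  · have hν := bimatchNum_le_deleteVerts (p := p) (q := q) G {y, y'} ∅
    rw [card_pair h.left_ne, card_empty] at hν
    refine hν.trans (Nat.add_le_add_right (bimatchNum_mono fun g hg => ?_) 2)
    simp only [mem_deleteVerts, mem_insert, mem_singleton] at hg
    exact hkeep g hg.1 (by tauto) (by tauto)
  · have hcover : G ⊆ H ∪ ({g ∈ G | p g = y'} ∪ {g ∈ G | p g = y}.erase f₀) := by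
      intro g hg
      have := hkeep g hg
      simp only [mem_union, mem_filter, mem_erase]
      grind
    have := card_le_card hcover
    have := card_union_le H ({g ∈ G | p g = y'} ∪ {g ∈ G | p g = y}.erase f₀)
    have := card_union_le {g ∈ G | p g = y'} ({g ∈ G | p g = y}.erase f₀)
    have hf₀y : f₀ ∈ {g ∈ G | p g = y} := mem_filter.2 ⟨hf₀, hp₀⟩
    have := card_erase_add_one hf₀y
    have := ih.degreeLE.left y
    have := ih.degreeLE.left y'
    omega

/-- The star of an edge `y'z'` is removed in the order: the edges from `y'` to the outside, the
edges `yz'`, the edges `y'z`, the copies of `y'z'`. -/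
theorem certBound_of_edge_outside (h : Twins p q G y y' z z') (ih : WeightInduction p q r t G)
    {f₀ : ι} (hf₀ : f₀ ∈ G) (hp₀ : p f₀ = y) (hqz : q f₀ ≠ z) (hqz' : q f₀ ≠ z') :
    CertBound (conflictGraph p q) (24 * r ^ 2) G (weight p q r G - t) := by
  obtain ⟨e, he, hpe, hqe⟩ := h.exists_edge y' z' (.inr rfl) (.inr rfl)
  obtain ⟨e₁, he₁, hpe₁, hqe₁⟩ := h.exists_edge y' z (.inr rfl) (.inl rfl)
  obtain ⟨e₂, he₂, hpe₂, hqe₂⟩ := h.exists_edge y z (.inl rfl) (.inl rfl)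
  refine CertBound.of_ranked_star ih.one_le he (fun g =>
    if p g = y then 1 else if q g = z then 2 else if q g = z' then 3 else 0) ?_
  intro f hf hadj G' hsub hkeep _
  have hss := nonNeighbors_ssubset (p := p) (q := q) hsub hf
  have hyy := h.left_ne
  have hzz := h.right_ne
  have hcl := h.closed_right
  simp only [conflictGraph_adj, hpe, hqe] at hadj hkeep
  by_cases hpf : p f = y
  · refine h.certBound_of_deleteVerts_subset ih hss (fun g hg => ?_) (x := e₁) ?_ (.inr hpe₁)
      (.inl hqe₁) <;>
    simp only [mem_deleteVerts, mem_insert, mem_singleton, mem_nonNeighbors_conflictGraph] at * <;>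
    grind
  replace hpf : p f = y' := by grind
  by_cases hqf : q f = z
  · refine h.certBound_of_keep ih hss hf₀ hp₀ hqz hqz' fun g hg hg₁ hg₂ => ?_
    rw [mem_nonNeighbors_conflictGraph]
    grind
  by_cases hqf' : q f = z'
  · refine h.certBound_of_deleteVerts_subset ih hss (fun g hg => ?_) (x := e₂) ?_ (.inl hpe₂)
      (.inl hqe₂) <;>
    simp only [mem_deleteVerts, mem_insert, mem_singleton, mem_nonNeighbors_conflictGraph] at * <;>
    grind
  convert ih.neutral_edge hf rfl using 1
  ext g
  have := @hsub g
  simp only [mem_nonNeighbors_conflictGraph, mem_deleteVerts, mem_singleton]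
  grind

theorem certBound_of_closed (h : Twins p q G y y' z z') (ih : WeightInduction p q r t G)
    (hclosed : ∀ g ∈ G, (p g = y ∨ p g = y') → (q g = z ∨ q g = z'))
    (hfull : FullFourCycle p q r G y y' z z' → CertBound (conflictGraph p q) (24 * r ^ 2)
      (deleteVerts p q G {y, y'} ∅) (weight p q r G - t - 24 * r ^ 2)) :
    CertBound (conflictGraph p q) (24 * r ^ 2) G (weight p q r G - t) := by
  obtain ⟨e, he, rfl, rfl⟩ := h.exists_edge y z (.inl rfl) (.inl rfl)
  refine CertBound.of_edge ih.one_le he (fun f hf hpf => ih.neutral_edge hf hpf.symm) ?_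
  intro f hf hqf hpf
  obtain rfl := (h.closed_right f hf (.inl hqf)).resolve_left hpf
  have hdel : deleteVerts p q G {p e, p f} {q e} = deleteVerts p q G {p e, p f} ∅ := by
    ext g
    have := h.closed_right g
    simp only [mem_deleteVerts, mem_insert, mem_singleton, notMem_empty]
    tauto
  rw [hdel]
  by_cases hcard : #G + 1 ≤ #(deleteVerts p q G {p e, p f} ∅) + 2 * r
  · have hν := bimatchNum_le_deleteVerts (p := p) (q := q) G {p e, p f} ∅
    rw [card_pair h.left_ne, card_empty] at hν
    exact ih.neutral_one (deleteVerts_ssubset he (by simp)) hν hcard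
  · exact hfull (h.fullFourCycle ih.degreeLE hclosed (by omega))

theorem certBound (h : Twins p q G y y' z z') (ih : WeightInduction p q r t G)
    (hfull : FullFourCycle p q r G y y' z z' → CertBound (conflictGraph p q) (24 * r ^ 2)
      (deleteVerts p q G {y, y'} ∅) (weight p q r G - t - 24 * r ^ 2)) :
    CertBound (conflictGraph p q) (24 * r ^ 2) G (weight p q r G - t) := by
  by_cases hclosed : ∀ g ∈ G, (p g = y ∨ p g = y') → (q g = z ∨ q g = z')
  · exact h.certBound_of_closed ih hclosed hfull
  push Not at hclosed
  obtain ⟨f₀, hf₀, hp₀ | hp₀, hqz, hqz'⟩ := hclosed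
  · exact h.certBound_of_edge_outside ih hf₀ hp₀ hqz hqz'
  · exact h.symm_left.certBound_of_edge_outside ih hf₀ hp₀ hqz hqz'

end Twins

end Twins

section FullPairs

variable {ι β γ : Type*} [DecidableEq β] [DecidableEq γ] {p : ι → β} {q : ι → γ}
  {r : ℕ} {G G' : Finset ι} {P Q : Finset β} {x y y' v v' : β} {z z' w w' : γ}

namespace FullFourCycle

theorem mono (h : FullFourCycle p q r G' y y' z z') (hdeg : DegreeLE p q r G) (hG : G' ⊆ G) :
    FullFourCycle p q r G y y' z z' := by
  have hleft : ∀ x, (x = y ∨ x = y') → {g ∈ G' | p g = x} = {g ∈ G | p g = x} := fun x hx =>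
    eq_of_subset_of_card_le (filter_subset_filter _ hG) ((hdeg.left x).trans (h.card_left x hx).ge)
  have hright : ∀ w, (w = z ∨ w = z') → {g ∈ G' | q g = w} = {g ∈ G | q g = w} := fun w hw =>
    eq_of_subset_of_card_le (filter_subset_filter _ hG)
      ((hdeg.right w).trans (h.card_right w hw).ge)
  refine ⟨⟨h.left_ne, h.right_ne, fun x w hx hw => ?_, fun g hg hw => ?_⟩, fun g hg hx => ?_,
    fun x hx => hleft x hx ▸ h.card_left x hx, fun w hw => hright w hw ▸ h.card_right w hw⟩
  · exact (h.exists_edge x w hx hw).imp fun g hg => ⟨hG hg.1, hg.2⟩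
  · have hg' : g ∈ {f ∈ G' | q f = q g} := hright _ hw ▸ mem_filter.2 ⟨hg, rfl⟩
    exact h.closed_right g (mem_filter.1 hg').1 hw
  · have hg' : g ∈ {f ∈ G' | p f = p g} := hleft _ hx ▸ mem_filter.2 ⟨hg, rfl⟩
    exact h.closed_left g (mem_filter.1 hg').1 hx

theorem pair_subset (h : FullFourCycle p q r G y y' z z') (h' : FullFourCycle p q r G v v' w w')
    (hx : x = y ∨ x = y') (hx' : x = v ∨ x = v') : ({v, v'} : Finset β) ⊆ {y, y'} := by
  intro u hu
  obtain ⟨g, hg, hgx, hgw⟩ := h'.exists_edge x w hx' (.inl rfl)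
  obtain ⟨f, hf, hfu, hfw⟩ := h'.exists_edge u w (by simpa using hu) (.inl rfl)
  have hw := h.closed_left g hg (hgx ▸ hx)
  simpa [hfu] using h.closed_right f hf (by rwa [hfw, ← hgw])

theorem pair_eq (h : FullFourCycle p q r G y y' z z') (h' : FullFourCycle p q r G v v' w w')
    (hx : x = y ∨ x = y') (hx' : x = v ∨ x = v') : ({y, y'} : Finset β) = {v, v'} :=
  (h'.pair_subset h hx' hx).antisymm (h.pair_subset h' hx hx')

theorem subset_image (h : FullFourCycle p q r G y y' z z') : {y, y'} ⊆ G.image p := by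
  intro x hx
  obtain ⟨g, hg, hgx, -⟩ := h.exists_edge x z (by simpa using hx) (.inl rfl)
  exact mem_image.2 ⟨g, hg, hgx⟩

theorem card_star (h : FullFourCycle p q r G y y' z z') :
    #{g ∈ G | p g ∈ ({y, y'} : Finset β)} = 2 * r := by
  simp only [mem_insert, mem_singleton]
  rw [card_filter_eq_or_eq h.left_ne, h.card_left y (.inl rfl), h.card_left y' (.inr rfl), two_mul]

end FullFourCycle

open Classical in
/-- The left sides of the thickened 4-cycle components of `G`. -/
noncomputable def fullPairs (p : ι → β) (q : ι → γ) (r : ℕ) (G : Finset ι) : Finset (Finset β) :=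
  (G.image p).powerset.filter fun P => ∃ y y' z z', P = {y, y'} ∧ FullFourCycle p q r G y y' z z'

theorem mem_fullPairs :
    P ∈ fullPairs p q r G ↔ ∃ y y' z z', P = {y, y'} ∧ FullFourCycle p q r G y y' z z' := by
  simp only [fullPairs, mem_filter, mem_powerset, and_iff_right_iff_imp]
  rintro ⟨y, y', z, z', rfl, h⟩
  exact h.subset_image

theorem FullFourCycle.pair_mem_fullPairs (h : FullFourCycle p q r G y y' z z') :
    {y, y'} ∈ fullPairs p q r G :=
  mem_fullPairs.2 ⟨y, y', z, z', rfl, h⟩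

theorem subset_image_of_mem_fullPairs (hP : P ∈ fullPairs p q r G) : P ⊆ G.image p := by
  obtain ⟨y, y', z, z', rfl, h⟩ := mem_fullPairs.1 hP
  exact h.subset_image

theorem fullPairs_mono (hdeg : DegreeLE p q r G) (hG : G' ⊆ G) :
    fullPairs p q r G' ⊆ fullPairs p q r G := by
  intro P hP
  obtain ⟨y, y', z, z', rfl, h⟩ := mem_fullPairs.1 hP
  exact (h.mono hdeg hG).pair_mem_fullPairs

theorem disjoint_of_mem_fullPairs (hP : P ∈ fullPairs p q r G) (hQ : Q ∈ fullPairs p q r G)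
    (hne : P ≠ Q) : Disjoint P Q := by
  obtain ⟨y, y', z, z', rfl, h⟩ := mem_fullPairs.1 hP
  obtain ⟨v, v', w, w', rfl, h'⟩ := mem_fullPairs.1 hQ
  exact disjoint_left.2 fun x hx hx' =>
    hne (h.pair_eq h' (by simpa using hx) (by simpa using hx'))

theorem card_fullPairs_mul_le (p : ι → β) (q : ι → γ) (r : ℕ) (G : Finset ι) :
    #(fullPairs p q r G) * (2 * r) ≤ #G := by
  classical
  calc #(fullPairs p q r G) * (2 * r) = ∑ P ∈ fullPairs p q r G, #{g ∈ G | p g ∈ P} := by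
        refine (sum_const_nat fun P hP => ?_).symm
        obtain ⟨y, y', z, z', rfl, h⟩ := mem_fullPairs.1 hP
        exact h.card_star
    _ = #((fullPairs p q r G).biUnion fun P => {g ∈ G | p g ∈ P}) := by
        refine (card_biUnion fun P hP Q hQ hne => ?_).symm
        exact disjoint_filter.2 fun g _ hgP =>
          disjoint_left.1 (disjoint_of_mem_fullPairs hP hQ hne) hgP
    _ ≤ #G := card_le_card (biUnion_subset.2 fun P _ => filter_subset _ _)

theorem FullFourCycle.card_fullPairs_deleteVerts_lt (h : FullFourCycle p q r G y y' z z')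
    (hdeg : DegreeLE p q r G) :
    #(fullPairs p q r (deleteVerts p q G {y, y'} ∅)) < #(fullPairs p q r G) := by
  refine card_lt_card ((ssubset_iff_of_subset (fullPairs_mono hdeg deleteVerts_subset)).2
    ⟨{y, y'}, h.pair_mem_fullPairs, fun hcon => ?_⟩)
  obtain ⟨g, hg, rfl⟩ := mem_image.1 (subset_image_of_mem_fullPairs hcon (mem_insert_self y _))
  exact (mem_deleteVerts.1 hg).2.1 (mem_insert_self _ _)

end FullPairs

section AcyclicityBound

variable {ι β γ : Type*} [DecidableEq β] [DecidableEq γ] {p : ι → β} {q : ι → γ}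
  {r : ℕ} {t : ℤ} {G : Finset ι} {y y' : β} {z z' : γ} {e : ι}

theorem FullFourCycle.weight_le (h : FullFourCycle p q r G y y' z z') (hdeg : DegreeLE p q r G)
    (hr : 2 ≤ r) :
    weight p q r G ≤ weight p q r (deleteVerts p q G {y, y'} ∅) + 24 * r ^ 2 + 2 := by
  have hν := bimatchNum_le_deleteVerts (p := p) (q := q) G {y, y'} ∅
  have hcard := hdeg.card_le (subset_refl (deleteVerts p q G {y, y'} ∅))
  have := one_le_weight_coeff hr
  rw [card_pair h.left_ne, card_empty] at hν hcard
  zify at hν hcard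
  unfold weight
  nlinarith

variable [DecidableEq ι]

theorem WeightInduction.certBound_of_not_rightSaturated (ih : WeightInduction p q r t G)
    (hsat : ¬RightSaturated p q G) :
    CertBound (conflictGraph p q) (24 * r ^ 2) G (weight p q r G - t) := by
  obtain ⟨e, he, hz⟩ := exists_isInessential_of_not_rightSaturated hsat
  exact .of_inessential ih.one_le ih.degreeLE he hz (fun H hH => ih.gain_one hH)
    fun f hf _ _ => ih.neutral_edge hf rfl

theorem WeightInduction.certBound_of_card_nbhd_le_one (ih : WeightInduction p q r t G)
    (he : e ∈ G) (hleaf : #(nbhd p q G {q e}) ≤ 1) :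
    CertBound (conflictGraph p q) (24 * r ^ 2) G (weight p q r G - t) := by
  refine .of_edge ih.one_le he (fun f hf hp => ih.neutral_edge hf hp.symm) fun f hf hq hp => ?_
  exact absurd (card_le_one.1 hleaf (p f) (mem_nbhd_of_mem hf (by simp [hq])) (p e)
    (mem_nbhd_of_mem he (by simp))) hp

theorem certBound_weight (hr : 2 ≤ r) (hdeg : DegreeLE p q r G) :
    CertBound (conflictGraph p q) (24 * r ^ 2) G (weight p q r G - 2 * #(fullPairs p q r G)) := by
  induction G using Finset.strongInduction with
  | H G IH =>
  have ih : WeightInduction p q r (2 * #(fullPairs p q r G)) G := by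
    refine ⟨hr, hdeg, fun G' hG' => (IH G' hG' (hdeg.mono hG'.subset)).mono ?_⟩
    gcongr
    exact fullPairs_mono hdeg hG'.subset
  rcases G.eq_empty_or_nonempty with rfl | hG
  · have hν := bimatchNum_le_card_image_right (p := p) (q := q) ∅
    exact ⟨0, by simp_all [weight], .zero _⟩
  by_cases hsat : RightSaturated p q G
  swap
  · exact ih.certBound_of_not_rightSaturated hsat
  by_cases hleaf : ∃ e ∈ G, #(nbhd p q G {q e}) ≤ 1
  · obtain ⟨e, he, hle⟩ := hleaf
    exact ih.certBound_of_card_nbhd_le_one he hle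
  have htwo : ∀ z ∈ G.image q, 2 ≤ #(nbhd p q G {z}) := by
    intro z hz
    obtain ⟨e, he, rfl⟩ := mem_image.1 hz
    exact not_le.1 fun hle => hleaf ⟨e, he, hle⟩
  by_cases htwin : ∀ z ∈ G.image q, ∀ z' ∈ G.image q, z ≠ z' → 3 ≤ #(nbhd p q G {z, z'})
  · exact ih.certBound_of_no_twins hG hsat htwin
  push Not at htwin
  obtain ⟨z, hz, z', hz', hne, hlt⟩ := htwin
  obtain ⟨y, y', h⟩ := exists_twins hne (htwo z hz) (htwo z' hz') (by omega)
  refine h.certBound ih fun hfull => ?_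
  obtain ⟨e, he, hpe, -⟩ := hfull.exists_edge y z (.inl rfl) (.inl rfl)
  refine (IH _ (deleteVerts_ssubset he (by simp [hpe])) (hdeg.mono deleteVerts_subset)).mono ?_
  have hlt := hfull.card_fullPairs_deleteVerts_lt hdeg
  have hweight := hfull.weight_le hdeg hr
  zify at hlt
  linarith

end AcyclicityBound

section Koenig

variable {ι β γ : Type*} [DecidableEq β] [DecidableEq γ] {p : ι → β} {q : ι → γ}
  {r : ℕ} {G : Finset ι}

theorem certBound_card_image [DecidableEq ι] (q : ι → γ) (G : Finset ι) :
    CertBound (conflictGraph q q) 1 G #(G.image q) := by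
  induction G using Finset.strongInduction with
  | H G IH =>
  rcases G.eq_empty_or_nonempty with rfl | ⟨e, he⟩
  · exact ⟨0, by simp, .zero _⟩
  refine .of_edge le_rfl he (fun f hf hq => ?_) fun f _ hq hne => absurd hq hne
  refine (IH _ (deleteVerts_ssubset hf (by simp))).mono ?_
  have hcover : G.image q ⊆ insert (q e) ((deleteVerts q q G {q e} {q f}).image q) := by
    intro z hz
    obtain ⟨g, hg, rfl⟩ := mem_image.1 hz
    by_cases hge : q g = q e
    · exact mem_insert.2 (.inl hge)
    · exact mem_insert_of_mem (mem_image_of_mem q (mem_deleteVerts.2 (by simp [hg, hge, hq])))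
  have := (card_le_card hcover).trans (card_insert_le _ _)
  zify at this
  linarith

theorem exists_vertexCover [Finite ι] (p : ι → β) (q : ι → γ) (G : Finset ι) :
    ∃ Y Z, deleteVerts p q G Y Z = ∅ ∧ #Y + #Z ≤ bimatchNum p q G := by
  classical
  have := Fintype.ofFinite (Set.range p)
  obtain ⟨S, hS⟩ := exists_acyclicCert_le (conflictGraph q q) G (Set.rangeFactorization p)
    (bimatchNum p q G) fun σ hσ hind hinj => by
      rw [isIndepSet_conflictGraph_iff] at hind
      exact IsBimatching.card_le_bimatchNum
        ⟨fun x hx y hy hxy => hinj hx hy (Subtype.ext hxy), hind.2⟩ hσ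
  obtain ⟨k, hk, hcert⟩ := certBound_card_image q {e ∈ G | Set.rangeFactorization p e ∈ S}
  refine ⟨Sᶜ.map (.subtype _), {e ∈ G | Set.rangeFactorization p e ∈ S}.image q, ?_, ?_⟩
  · refine eq_empty_of_forall_notMem fun g hg => ?_
    obtain ⟨hg, hY, hZ⟩ := mem_deleteVerts.1 hg
    by_cases hgS : Set.rangeFactorization p g ∈ S
    · exact hZ (mem_image_of_mem q (mem_filter.2 ⟨hg, hgS⟩))
    · exact hY (mem_map.2 ⟨_, mem_compl.2 hgS, rfl⟩)
  · have := hS k hcert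
    have := card_add_card_compl S
    rw [card_map]
    omega

theorem DegreeLE.card_le_mul_bimatchNum [Finite ι] (hdeg : DegreeLE p q r G) :
    #G ≤ r * bimatchNum p q G := by
  obtain ⟨Y, Z, hcover, hcard⟩ := exists_vertexCover p q G
  have := hdeg.card_le hcover.subset
  rw [card_empty] at this
  nlinarith

theorem DegreeLE.mul_card_le_mul_weight [Finite ι] (hdeg : DegreeLE p q r G) (hr : 2 ≤ r) :
    (12 * r ^ 2 + 1) * (#G : ℤ) ≤ r * weight p q r G := by
  have hν := hdeg.card_le_mul_bimatchNum
  have := one_le_weight_coeff hr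
  zify at hν
  unfold weight
  nlinarith

end Koenig

/-! ### Three-partite hypergraphs -/

section Trimatching

variable {ι α β γ : Type*} {o : ι → α} {p : ι → β} {q : ι → γ}

/-- `M` is a matching of the 3-partite hypergraph whose edge `e` has the vertices
`o e, p e, q e`. -/
def IsTrimatching (o : ι → α) (p : ι → β) (q : ι → γ) (M : Finset ι) : Prop :=
  Set.InjOn o M ∧ IsBimatching p q M

theorem isTrimatching_empty : IsTrimatching o p q ∅ := by
  simp [IsTrimatching, IsBimatching]

theorem IsTrimatching.union [DecidableEq ι] [DecidableEq α] [DecidableEq β] [DecidableEq γ]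
    {M N : Finset ι} (hM : IsTrimatching o p q M) (hN : IsTrimatching o p q N)
    (h : ∀ e ∈ M, o e ∉ N.image o ∧ p e ∉ N.image p ∧ q e ∉ N.image q) :
    IsTrimatching o p q (M ∪ N) := by
  have hdisj : Disjoint (M : Set ι) N := Set.disjoint_left.2 fun e he he' =>
    (h e he).1 (mem_image_of_mem o he')
  simp only [IsTrimatching, IsBimatching, coe_union, Set.injOn_union hdisj]
  exact ⟨⟨hM.1, hN.1, fun e he f hf hef => (h e he).1 (hef ▸ mem_image_of_mem o hf)⟩,
    ⟨hM.2.1, hN.2.1, fun e he f hf hef => (h e he).2.1 (hef ▸ mem_image_of_mem p hf)⟩,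
    ⟨hM.2.2, hN.2.2, fun e he f hf hef => (h e he).2.2 (hef ▸ mem_image_of_mem q hf)⟩⟩

theorem isTrimatching_pair [DecidableEq ι] {e f : ι} (ho : o e ≠ o f) (hp : p e ≠ p f)
    (hq : q e ≠ q f) : IsTrimatching o p q {e, f} := by
  simp [IsTrimatching, IsBimatching, Set.injOn_pair, ho, hp, hq]

end Trimatching

section DeficientLabels

variable {ι α β γ : Type*} [DecidableEq α] [DecidableEq β] [DecidableEq γ]
  {o : ι → α} {p : ι → β} {q : ι → γ} {r ν : ℕ} {E : Finset ι}

theorem exists_deficient_labels [Finite ι] [Fintype α] (hr : 2 ≤ r) (hdeg : DegreeLE p q r E)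
    (hν : ∀ σ ⊆ E, IsTrimatching o p q σ → #σ ≤ ν) :
    ∃ S : Finset α, (12 * r ^ 2 + 1) * (#{e ∈ E | o e ∈ S} : ℤ) ≤
      r * (24 * r ^ 2 * (#S + ν - Fintype.card α)
        + 2 * #(fullPairs p q r {e ∈ E | o e ∈ S})) := by
  classical
  obtain ⟨S, hS⟩ := exists_acyclicCert_le (conflictGraph p q) E o ν fun σ hσ hind ho =>
    hν σ hσ ⟨ho, isIndepSet_conflictGraph_iff.1 hind⟩
  have hdegS := hdeg.mono (filter_subset (fun e => o e ∈ S) E)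
  obtain ⟨k, hk, hcert⟩ := certBound_weight hr hdegS
  refine ⟨S, (hdegS.mul_card_le_mul_weight hr).trans ?_⟩
  have hkS : (k : ℤ) ≤ #S + ν - Fintype.card α := by
    have := hS k hcert
    lia
  gcongr
  calc weight p q r {e ∈ E | o e ∈ S}
      ≤ 24 * r ^ 2 * k + 2 * #(fullPairs p q r {e ∈ E | o e ∈ S}) := by
        exact_mod_cast sub_le_iff_le_add.1 hk
    _ ≤ _ := by gcongr

theorem exists_isTrimatching [Finite ι] [Finite α] (hr : 2 ≤ r)
    (hlab : ∀ a, #{e ∈ E | o e = a} ≤ r) (hdeg : DegreeLE p q r E) :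
    ∃ σ ⊆ E, IsTrimatching o p q σ ∧ #E ≤ 2 * r * #σ := by
  classical
  cases nonempty_fintype α
  obtain ⟨σ, hσ, hmax⟩ := exists_max_image {σ ∈ E.powerset | IsTrimatching o p q σ} card
    ⟨∅, mem_filter.2 ⟨empty_mem_powerset E, isTrimatching_empty⟩⟩
  simp only [mem_filter, mem_powerset, and_imp] at hσ hmax
  refine ⟨σ, hσ.1, hσ.2, ?_⟩
  obtain ⟨S, hS⟩ := exists_deficient_labels hr hdeg hmax
  have hsplit := card_filter_add_card_filter_not (s := E) fun e => o e ∈ S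
  have hcompl : #{e ∈ E | o e ∉ S} ≤ #Sᶜ * r := by
    simpa only [mem_compl] using card_filter_mem_le hlab Sᶜ
  have hfull := card_fullPairs_mul_le p q r {e ∈ E | o e ∈ S}
  have hcard := card_add_card_compl S
  zify at hsplit hcompl hfull hcard ⊢
  have hinside : (#{e ∈ E | o e ∈ S} : ℤ) ≤ 2 * r * (#S + #σ - Fintype.card α) := by
    refine le_of_mul_le_mul_left (a := 12 * (r : ℤ) ^ 2) ?_ (by positivity)
    linarith
  nlinarith

end DeficientLabels

section Fano

theorem mem_fanoEdges {α β γ : Type*} {u v : α} {y y' : β} {z z' : γ} {e : α × β × γ} :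
    e ∈ fanoEdges u v y y' z z' ↔
      e = (u, y, z) ∨ e = (u, y', z') ∨ e = (v, y, z') ∨ e = (v, y', z) := by
  simp [fanoEdges]

variable {ι α β γ : Type*} [DecidableEq β] [DecidableEq γ] {o : ι → α} {p : ι → β}
  {q : ι → γ} {r : ℕ} {G : Finset ι} {u : α} {y y' : β} {z z' : γ}

/-- The vertices `u, v, y, y', z, z'` span a copy of `(r/2) • F` in the 3-partite hypergraph `G`
whose edge `g` has the vertices `o g, p g, q g`, and `y, y', z, z'` span a component of the
bipartite multigraph obtained by forgetting `o`. -/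
structure FanoAt [DecidableEq α] (o : ι → α) (p : ι → β) (q : ι → γ) (r : ℕ) (G : Finset ι)
    (u v : α) (y y' : β) (z z' : γ) : Prop where
  full : FullFourCycle p q r G y y' z z'
  label_ne : u ≠ v
  card_eq : ∀ e ∈ fanoEdges u v y y' z z', 2 * #{g ∈ G | (o g, p g, q g) = e} = r

/-- Some two disjoint edges of the bipartite multigraph `G` at left vertices in `P` carry different
labels. -/
def IsSplit (o : ι → α) (p : ι → β) (q : ι → γ) (G : Finset ι) (P : Finset β) : Prop :=
  ∃ e ∈ G, ∃ f ∈ G, p e ∈ P ∧ p f ∈ P ∧ p e ≠ p f ∧ q e ≠ q f ∧ o e ≠ o f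

namespace FullFourCycle

theorem symm_right (h : FullFourCycle p q r G y y' z z') : FullFourCycle p q r G y y' z' z :=
  ⟨⟨h.left_ne, h.right_ne.symm, fun x w hx hw => h.exists_edge x w hx hw.symm,
    fun g hg hw => h.closed_right g hg hw.symm⟩, fun g hg hx => (h.closed_left g hg hx).symm,
    h.card_left, fun w hw => h.card_right w hw.symm⟩

theorem card_left_add (h : FullFourCycle p q r G y y' z z') {x : β} (hx : x = y ∨ x = y') :
    #{g ∈ G | p g = x ∧ q g = z} + #{g ∈ G | p g = x ∧ q g = z'} = r := by
  rw [← filter_filter, ← filter_filter, ← card_filter_eq_or_eq h.right_ne, filter_true_of_mem,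
    h.card_left x hx]
  exact fun g hg => h.closed_left g (mem_filter.1 hg).1 ((mem_filter.1 hg).2 ▸ hx)

theorem card_right_add (h : FullFourCycle p q r G y y' z z') {w : γ} (hw : w = z ∨ w = z') :
    #{g ∈ G | p g = y ∧ q g = w} + #{g ∈ G | p g = y' ∧ q g = w} = r := by
  simp only [and_comm (b := q _ = w)]
  rw [← filter_filter, ← filter_filter, ← card_filter_eq_or_eq h.left_ne, filter_true_of_mem,
    h.card_right w hw]
  exact fun g hg => h.closed_right g (mem_filter.1 hg).1 ((mem_filter.1 hg).2 ▸ hw)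

theorem exists_label (h : FullFourCycle p q r G y y' z z') (hs : ¬IsSplit o p q G {y, y'}) :
    ∃ u, ∀ g ∈ G, (p g = y ∧ q g = z ∨ p g = y' ∧ q g = z') → o g = u := by
  have hopp : ∀ g ∈ G, ∀ f ∈ G, p g = y ∧ q g = z → p f = y' ∧ q f = z' → o g = o f := by
    rintro g hg f hf ⟨hpg, hqg⟩ ⟨hpf, hqf⟩
    by_contra ho
    exact hs ⟨g, hg, f, hf, by simp [hpg], by simp [hpf], by rw [hpg, hpf]; exact h.left_ne,
      by rw [hqg, hqf]; exact h.right_ne, ho⟩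
  obtain ⟨e, he, he'⟩ := h.exists_edge y z (.inl rfl) (.inl rfl)
  obtain ⟨f, hf, hf'⟩ := h.exists_edge y' z' (.inr rfl) (.inr rfl)
  refine ⟨o f, fun g hg hg' => hg'.elim (fun hg' => hopp g hg f hf hg' hf') fun hg' => ?_⟩
  exact (hopp e he g hg he' hg').symm.trans (hopp e he f hf he' hf')

variable [DecidableEq α]

theorem card_diagonal_le (h : FullFourCycle p q r G y y' z z')
    (hu : ∀ g ∈ G, (p g = y ∧ q g = z ∨ p g = y' ∧ q g = z') → o g = u) :
    2 * #{g ∈ G | p g = y ∧ q g = z} ≤ #{g ∈ G | o g = u} := by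
  classical
  have hrow := h.card_left_add (.inr rfl)
  have hcol := h.card_right_add (.inl rfl)
  calc 2 * #{g ∈ G | p g = y ∧ q g = z}
      = #{g ∈ G | p g = y ∧ q g = z} + #{g ∈ G | p g = y' ∧ q g = z'} := by lia
    _ = #{g ∈ G | p g = y ∧ q g = z ∨ p g = y' ∧ q g = z'} := by
        rw [filter_or, card_union_of_disjoint]
        exact disjoint_filter.2 fun g _ hg hg' => h.left_ne (hg.1.symm.trans hg'.1)
    _ ≤ #{g ∈ G | o g = u} := card_le_card fun g hg => by
        rw [mem_filter] at hg ⊢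
        exact ⟨hg.1, hu g hg.1 hg.2⟩

theorem exists_fanoAt (h : FullFourCycle p q r G y y' z z') (hr : 0 < r)
    (hlab : ∀ a, #{g ∈ G | o g = a} ≤ r) (hs : ¬IsSplit o p q G {y, y'}) :
    ∃ u v, FanoAt o p q r G u v y y' z z' := by
  obtain ⟨u, hu⟩ := h.exists_label hs
  obtain ⟨v, hv⟩ := h.symm_right.exists_label hs
  refine ⟨u, v, h, ?_, fun e he => ?_⟩
  · rintro rfl
    have hstar : #{g ∈ G | p g ∈ ({y, y'} : Finset β)} ≤ #{g ∈ G | o g = u} := by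
      refine card_le_card fun g hg => ?_
      simp only [mem_filter, mem_insert, mem_singleton] at hg ⊢
      have := h.closed_left g hg.1 hg.2
      have := hu g hg.1
      have := hv g hg.1
      tauto
    have := h.card_star
    have := hlab u
    lia
  · have hcard : #{g ∈ G | (o g, p g, q g) = e} = #{g ∈ G | p g = e.2.1 ∧ q g = e.2.2} := by
      refine congrArg card (filter_congr fun g hg => ?_)
      have := hu g hg
      have := hv g hg
      rcases mem_fanoEdges.1 he with rfl | rfl | rfl | rfl <;> simp only [Prod.mk.injEq] <;> tauto
    have hrow := h.card_left_add (.inl rfl)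
    have hrow' := h.card_left_add (.inr rfl)
    have hcol := h.card_right_add (.inl rfl)
    have hdiag := (h.card_diagonal_le hu).trans (hlab u)
    have hdiag' := (h.symm_right.card_diagonal_le hv).trans (hlab v)
    rw [hcard]
    rcases mem_fanoEdges.1 he with rfl | rfl | rfl | rfl <;> lia

end FullFourCycle
end Fano

section SplitPairs

variable {ι α β γ : Type*} [DecidableEq β] [DecidableEq γ]
  {o : ι → α} {p : ι → β} {q : ι → γ} {r ν : ℕ} {G τ : Finset ι} {P : Finset β} {e f g : ι}

theorem mem_of_mem_fullPairs (hP : P ∈ fullPairs p q r G) (he : e ∈ G) (hg : g ∈ G)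
    (hpe : p e ∈ P) (hq : q e = q g) : p g ∈ P := by
  obtain ⟨y, y', z, z', rfl, h⟩ := mem_fullPairs.1 hP
  simp only [mem_insert, mem_singleton] at hpe ⊢
  exact h.closed_right g hg (hq ▸ h.closed_left e he hpe)

theorem eq_pair_of_mem_fullPairs (hP : P ∈ fullPairs p q r G) (he : p e ∈ P) (hf : p f ∈ P)
    (hne : p e ≠ p f) : P = {p e, p f} := by
  obtain ⟨y, y', z, z', rfl, -⟩ := mem_fullPairs.1 hP
  refine (eq_of_subset_of_card_le (by simp [insert_subset_iff, he, hf]) ?_).symm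
  rw [card_pair hne]
  exact card_le_two

/-- `τ` is a matching of the 3-partite hypergraph `G` that covers the left side of every thickened
4-cycle component it meets, and meets nothing else. -/
structure IsPairMatching (o : ι → α) (p : ι → β) (q : ι → γ) (r : ℕ) (G τ : Finset ι) : Prop where
  subset : τ ⊆ G
  isTrimatching : IsTrimatching o p q τ
  exists_pair : ∀ g ∈ τ, ∃ P ∈ fullPairs p q r G, p g ∈ P ∧ P ⊆ τ.image p

namespace IsPairMatching

theorem right_notMem (h : IsPairMatching o p q r G τ) (he : e ∈ G) (hp : p e ∉ τ.image p) :
    q e ∉ τ.image q := by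
  intro hq
  obtain ⟨g, hg, hge⟩ := mem_image.1 hq
  obtain ⟨P, hP, hgP, hPτ⟩ := h.exists_pair g hg
  exact hp (hPτ (mem_of_mem_fullPairs hP (h.subset hg) he hgP hge))

variable [DecidableEq α]

theorem pair_union [DecidableEq ι] (h : IsPairMatching o p q r G τ) (hP : P ∈ fullPairs p q r G)
    (hPτ : ∀ g ∈ G, p g ∈ P → o g ∉ τ.image o) (he : e ∈ G) (hf : f ∈ G) (hpe : p e ∈ P)
    (hpf : p f ∈ P) (hp : p e ≠ p f) (hq : q e ≠ q f) (ho : o e ≠ o f) :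
    IsPairMatching o p q r G ({e, f} ∪ τ) := by
  have hef : ∀ g ∈ ({e, f} : Finset ι), g ∈ G ∧ p g ∈ P := by simp [he, hf, hpe, hpf]
  have hpτ : ∀ g, p g ∈ P → p g ∉ τ.image p := by
    intro g hg hgτ
    obtain ⟨g', hg', hgg'⟩ := mem_image.1 hgτ
    exact hPτ g' (h.subset hg') (hgg' ▸ hg) (mem_image_of_mem o hg')
  refine ⟨union_subset (fun g hg => (hef g hg).1) h.subset,
    (isTrimatching_pair ho hp hq).union h.isTrimatching fun g hg => ?_, fun g hg => ?_⟩
  · obtain ⟨hgG, hgP⟩ := hef g hg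
    exact ⟨hPτ g hgG hgP, hpτ g hgP, h.right_notMem hgG (hpτ g hgP)⟩
  · rw [image_union]
    rcases mem_union.1 hg with hg | hg
    · refine ⟨P, hP, (hef g hg).2, subset_trans ?_ subset_union_left⟩
      rw [eq_pair_of_mem_fullPairs hP hpe hpf hp, image_insert, image_singleton]
    · obtain ⟨Q, hQ, hgQ, hQτ⟩ := h.exists_pair g hg
      exact ⟨Q, hQ, hgQ, hQτ.trans subset_union_right⟩

theorem exists_label_mem (h : IsPairMatching o p q r G τ)
    (hmax : ∀ τ', IsPairMatching o p q r G τ' → #τ' ≤ #τ) (hP : P ∈ fullPairs p q r G)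
    (hs : IsSplit o p q G P) : ∃ g ∈ G, p g ∈ P ∧ o g ∈ τ.image o := by
  classical
  by_contra! hcon
  obtain ⟨e, he, f, hf, hpe, hpf, hp, hq, ho⟩ := hs
  refine (hmax _ (h.pair_union hP hcon he hf hpe hpf hp hq ho)).not_gt (card_lt_card ?_)
  refine (ssubset_iff_of_subset subset_union_right).2 ⟨e, by simp, fun heτ => ?_⟩
  exact hcon e he hpe (mem_image_of_mem o heτ)

open Classical in
theorem card_isSplit_le (h : IsPairMatching o p q r G τ)
    (hmax : ∀ τ', IsPairMatching o p q r G τ' → #τ' ≤ #τ) (hlab : ∀ a, #{g ∈ G | o g = a} ≤ r) :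
    #{P ∈ fullPairs p q r G | IsSplit o p q G P} ≤ #τ * r :=
  calc #{P ∈ fullPairs p q r G | IsSplit o p q G P}
      ≤ #({P ∈ fullPairs p q r G | IsSplit o p q G P}.biUnion
          fun P => {g ∈ G | p g ∈ P ∧ o g ∈ τ.image o}) := by
        refine card_le_card_biUnion (fun P hP Q hQ hne => ?_) fun P hP => ?_
        · have hPQ := disjoint_of_mem_fullPairs (mem_filter.1 hP).1 (mem_filter.1 hQ).1 hne
          exact disjoint_filter.2 fun g _ hgP hgQ => disjoint_left.1 hPQ hgP.1 hgQ.1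
        · obtain ⟨g, hg, hgP⟩ := h.exists_label_mem hmax (mem_filter.1 hP).1 (mem_filter.1 hP).2
          exact ⟨g, mem_filter.2 ⟨hg, hgP⟩⟩
    _ ≤ #{g ∈ G | o g ∈ τ.image o} := card_le_card (biUnion_subset.2 fun P _ =>
        monotone_filter_right _ fun g _ hg => hg.2)
    _ ≤ #(τ.image o) * r := card_filter_mem_le hlab _
    _ ≤ #τ * r := by gcongr; exact card_image_le

theorem card_add_card_le [Finite ι] [Finite α] (h : IsPairMatching o p q r G τ) (hr : 2 ≤ r)
    (hlab : ∀ a, #{g ∈ G | o g = a} ≤ r) (hdeg : DegreeLE p q r G)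
    (hν : ∀ σ ⊆ G, IsTrimatching o p q σ → #σ ≤ ν) : #G + #τ ≤ 2 * r * ν := by
  classical
  set E := deleteVerts o p G (τ.image o) (τ.image p) with hE
  have hEG : E ⊆ G := deleteVerts_subset
  obtain ⟨σ, hσE, hσ, hcard⟩ := exists_isTrimatching hr
    (fun a => (card_le_card (filter_subset_filter _ hEG)).trans (hlab a)) (hdeg.mono hEG)
  have hdisj : ∀ g ∈ σ, o g ∉ τ.image o ∧ p g ∉ τ.image p ∧ q g ∉ τ.image q := fun g hg =>
    have ⟨hgG, hog, hpg⟩ := mem_deleteVerts.1 (hσE hg)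
    ⟨hog, hpg, h.right_notMem hgG hpg⟩
  have hunion : #σ + #τ ≤ ν := by
    rw [← card_union_of_disjoint (disjoint_left.2 fun g hg hg' =>
      (hdisj g hg).1 (mem_image_of_mem o hg'))]
    exact hν _ (union_subset (hσE.trans hEG) h.subset) (hσ.union h.isTrimatching hdisj)
  calc #G + #τ ≤ #E + #(τ.image o) * r + #(τ.image p) * r :=
        DegreeLE.card_add_card_le ⟨hlab, hdeg.left⟩ hE.ge fun g hg =>
          ⟨h.subset hg, mem_image_of_mem o hg, mem_image_of_mem p hg⟩
    _ ≤ 2 * r * #σ + #τ * r + #τ * r := by gcongr <;> exact card_image_le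
    _ = 2 * r * (#σ + #τ) := by ring
    _ ≤ 2 * r * ν := by gcongr

end IsPairMatching

open Classical in
theorem card_isSplit_le [Finite ι] [Finite α] [DecidableEq α] (hr : 2 ≤ r)
    (hlab : ∀ a, #{g ∈ G | o g = a} ≤ r) (hdeg : DegreeLE p q r G)
    (hν : ∀ σ ⊆ G, IsTrimatching o p q σ → #σ ≤ ν) :
    #{P ∈ fullPairs p q r G | IsSplit o p q G P} + r * #G ≤ 2 * r ^ 2 * ν := by
  obtain ⟨τ, hτ, hmax⟩ := exists_max_image {τ ∈ G.powerset | IsPairMatching o p q r G τ} card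
    ⟨∅, mem_filter.2 ⟨empty_mem_powerset G, empty_subset G, isTrimatching_empty, by simp⟩⟩
  simp only [mem_filter, mem_powerset, and_imp] at hτ hmax
  have hsplit := hτ.2.card_isSplit_le (fun τ' hτ' => hmax τ' hτ'.subset hτ') hlab
  have hcard := hτ.2.card_add_card_le hr hlab hdeg hν
  nlinarith

end SplitPairs

section FanoFamily

variable {ι α β γ : Type*} [DecidableEq α] [DecidableEq β] [DecidableEq γ] {o : ι → α} {p : ι → β}
  {q : ι → γ} {r ν : ℕ} {E G : Finset ι} {S : Finset α} {a u v u₁ v₁ : α} {y y' y₁ y₁' : β}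
  {z z' z₁ z₁' : γ}

namespace FanoAt

theorem le_card_label (h : FanoAt o p q r G u v y y' z z') (ha : a = u ∨ a = v) :
    r ≤ #{g ∈ G | o g = a ∧ p g ∈ ({y, y'} : Finset β)} := by
  obtain ⟨e, he, f, hf, hne, hea, hfa⟩ : ∃ e ∈ fanoEdges u v y y' z z',
      ∃ f ∈ fanoEdges u v y y' z z', e ≠ f ∧ e.1 = a ∧ f.1 = a := by
    rcases ha with rfl | rfl
    · exact ⟨(a, y, z), by simp [mem_fanoEdges], (a, y', z'), by simp [mem_fanoEdges],
        by simp [h.full.left_ne], rfl, rfl⟩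
    · exact ⟨(a, y, z'), by simp [mem_fanoEdges], (a, y', z), by simp [mem_fanoEdges],
        by simp [h.full.left_ne], rfl, rfl⟩
  have hleft : ∀ e ∈ fanoEdges u v y y' z z', e.2.1 ∈ ({y, y'} : Finset β) := fun e he => by
    rcases mem_fanoEdges.1 he with rfl | rfl | rfl | rfl <;> simp
  calc r = #{g ∈ G | (o g, p g, q g) = e} + #{g ∈ G | (o g, p g, q g) = f} := by
        have := h.card_eq e he
        have := h.card_eq f hf
        lia
    _ = #{g ∈ G | (o g, p g, q g) = e ∨ (o g, p g, q g) = f} := (card_filter_eq_or_eq hne G).symm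
    _ ≤ _ := card_le_card <| monotone_filter_right _ fun g _ hg => by
        rcases hg with rfl | rfl
        exacts [⟨hea, hleft _ he⟩, ⟨hfa, hleft _ hf⟩]

theorem disjoint_label (h : FanoAt o p q r G u v y y' z z') (hr : 0 < r)
    (hlab : ∀ a, #{g ∈ G | o g = a} ≤ r) (h₁ : FanoAt o p q r G u₁ v₁ y₁ y₁' z₁ z₁')
    (hdisj : Disjoint ({y, y'} : Finset β) {y₁, y₁'}) :
    Disjoint ({u, v} : Finset α) {u₁, v₁} := by
  classical
  refine disjoint_left.2 fun a ha ha₁ => ?_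
  have hle := h.le_card_label (by simpa using ha)
  have hle₁ := h₁.le_card_label (by simpa using ha₁)
  have hadd : #{g ∈ G | o g = a ∧ p g ∈ ({y, y'} : Finset β)} +
      #{g ∈ G | o g = a ∧ p g ∈ ({y₁, y₁'} : Finset β)} ≤ #{g ∈ G | o g = a} := by
    rw [← card_union_of_disjoint (disjoint_filter.2 fun g _ hg hg₁ =>
      disjoint_left.1 hdisj hg.2 hg₁.2), ← filter_or]
    exact card_le_card (monotone_filter_right _ fun g _ hg => hg.elim And.left And.left)
  have := hlab a
  lia

theorem disjoint (h : FanoAt o p q r G u v y y' z z') (hr : 0 < r)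
    (hlab : ∀ a, #{g ∈ G | o g = a} ≤ r) (h₁ : FanoAt o p q r G u₁ v₁ y₁ y₁' z₁ z₁')
    (hne : ({y, y'} : Finset β) ≠ {y₁, y₁'}) :
    Disjoint ({u, v} : Finset α) {u₁, v₁} ∧ Disjoint ({y, y'} : Finset β) {y₁, y₁'} ∧
      Disjoint ({z, z'} : Finset γ) {z₁, z₁'} := by
  have hdisj := disjoint_of_mem_fullPairs h.full.pair_mem_fullPairs h₁.full.pair_mem_fullPairs hne
  refine ⟨h.disjoint_label hr hlab h₁ hdisj, hdisj, disjoint_left.2 fun w hw hw₁ => ?_⟩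
  obtain ⟨g, hg, hgy, rfl⟩ := h.full.exists_edge y w (.inl rfl) (by simpa using hw)
  have hy := h₁.full.closed_right g hg (by simpa using hw₁)
  exact disjoint_left.1 hdisj (mem_insert_self y _) (by simpa [hgy] using hy)

end FanoAt

/-- `T` is a family of pairwise disjoint copies of `(r/2) • F` as described by `FanoAt`. -/
structure IsFanoFamily (o : ι → α) (p : ι → β) (q : ι → γ) (r : ℕ) (G : Finset ι)
    (T : Finset (α × α × β × β × γ × γ)) : Prop where
  fanoAt : ∀ t ∈ T, FanoAt o p q r G t.1 t.2.1 t.2.2.1 t.2.2.2.1 t.2.2.2.2.1 t.2.2.2.2.2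
  disjoint : ∀ t ∈ T, ∀ t' ∈ T, t ≠ t' →
    Disjoint ({t.1, t.2.1} : Finset α) {t'.1, t'.2.1} ∧
    Disjoint ({t.2.2.1, t.2.2.2.1} : Finset β) {t'.2.2.1, t'.2.2.2.1} ∧
    Disjoint ({t.2.2.2.2.1, t.2.2.2.2.2} : Finset γ) {t'.2.2.2.2.1, t'.2.2.2.2.2}

open Classical in
theorem exists_isFanoFamily_card_eq (hr : 0 < r) (hlab : ∀ a, #{g ∈ G | o g = a} ≤ r) :
    ∃ T, IsFanoFamily o p q r G T ∧ #T = #{P ∈ fullPairs p q r G | ¬IsSplit o p q G P} := by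
  have hfano : ∀ P : {P ∈ fullPairs p q r G | ¬IsSplit o p q G P},
      ∃ t : α × α × β × β × γ × γ, ({t.2.2.1, t.2.2.2.1} : Finset β) = P ∧
        FanoAt o p q r G t.1 t.2.1 t.2.2.1 t.2.2.2.1 t.2.2.2.2.1 t.2.2.2.2.2 := by
    rintro ⟨P, hP⟩
    obtain ⟨hP, hs⟩ := mem_filter.1 hP
    obtain ⟨y, y', z, z', rfl, h⟩ := mem_fullPairs.1 hP
    obtain ⟨u, v, huv⟩ := h.exists_fanoAt hr hlab hs
    exact ⟨(u, v, y, y', z, z'), rfl, huv⟩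
  choose t htP ht using hfano
  have hinj : Function.Injective t := fun P Q hPQ => Subtype.ext (by rw [← htP, ← htP, hPQ])
  refine ⟨univ.image t, ⟨?_, ?_⟩, ?_⟩
  · simp only [mem_image, mem_univ, true_and, forall_exists_index, forall_apply_eq_imp_iff]
    exact ht
  · simp only [mem_image, mem_univ, true_and, forall_exists_index, forall_apply_eq_imp_iff]
    refine fun P Q hne => (ht P).disjoint hr hlab (ht Q) fun h => hne ?_
    rw [htP, htP] at h
    rw [Subtype.ext h]
  · rw [card_image_of_injective _ hinj, card_univ, Fintype.card_coe]

theorem exists_isFanoFamily [Finite ι] [Fintype α] (hr : 2 ≤ r)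
    (hlab : ∀ a, #{e ∈ E | o e = a} = r) (hdeg : DegreeLE p q r E)
    (hν : ∀ σ ⊆ E, IsTrimatching o p q σ → #σ ≤ ν) :
    ∃ G T, IsFanoFamily o p q r G T ∧
      (Fintype.card α : ℤ) ≤ 2 * #T + 14 * r ^ 2 * (2 * ν - Fintype.card α) := by
  classical
  obtain ⟨S, hS⟩ := exists_deficient_labels hr hdeg hν
  set G := {e ∈ E | o e ∈ S}
  have hGE : G ⊆ E := filter_subset _ _
  have hlabG : ∀ a, #{g ∈ G | o g = a} ≤ r := fun a =>
    (card_le_card (filter_subset_filter _ hGE)).trans (hlab a).le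
  obtain ⟨T, hT, hcard⟩ := exists_isFanoFamily_card_eq (p := p) (q := q) (by lia) hlabG
  refine ⟨G, T, hT, ?_⟩
  have hsplit := card_isSplit_le hr hlabG (hdeg.mono hGE) fun σ hσ => hν σ (hσ.trans hGE)
  have hadd := card_filter_add_card_filter_not (s := fullPairs p q r G) (IsSplit o p q G)
  have hG : #G = #S * r := card_filter_mem_eq hlab S
  have hSα : #S ≤ Fintype.card α := card_le_univ S
  rw [hG] at hS hsplit
  zify at hsplit hadd hSα hcard
  have : (2 : ℤ) ≤ r := by exact_mod_cast hr
  have hfull : (12 * (r : ℤ) ^ 2 + 1) * #S ≤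
      24 * r ^ 2 * (#S + ν - Fintype.card α) + 2 * #(fullPairs p q r G) := by
    refine le_of_mul_le_mul_left (a := (r : ℤ)) ?_ (by linarith)
    push_cast at hS
    linarith
  have hmul : 0 ≤ (10 * (r : ℤ) ^ 2 - 1) * (Fintype.card α - #S) :=
    mul_nonneg (by nlinarith) (by linarith)
  linarith

end FanoFamily

section Transfer

theorem exists_label_trimming {ι α : Type*} [Fintype ι] [DecidableEq α] {o : ι → α} {r : ℕ}
    (h : ∀ a, r ≤ #{i | o i = a}) : ∃ E : Finset ι, ∀ a, #{e ∈ E | o e = a} = r := by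
  choose S hS hcard using fun a => exists_subset_card_eq (h a)
  have hmem : ∀ {a i}, i ∈ S a → o i = a := fun hi => (mem_filter.1 (hS _ hi)).2
  classical
  refine ⟨univ.filter fun i => i ∈ S (o i), fun a => (congrArg card ?_).trans (hcard a)⟩
  ext i
  simp only [mem_filter, mem_univ, true_and]
  exact ⟨fun ⟨hi, ha⟩ => ha ▸ hi, fun hi => ⟨(hmem hi).symm ▸ hi, hmem hi⟩⟩

variable {α β γ : Type*} {H : Multiset (α × β × γ)} {r s : ℕ}

theorem card_filter_coe {δ : Type*} [DecidableEq δ] (H : Multiset δ) (P : δ → Prop)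
    [DecidablePred P] : #{i : H | P i.1} = (H.filter P).card := by
  conv_rhs => rw [← Multiset.map_univ_coe H, Multiset.filter_map, Multiset.card_map]
  rfl

theorem IsMatching.card_le_matchNum {M : Finset (α × β × γ)} (hM : IsMatching H M) :
    #M ≤ matchNum H := by
  classical
  refine le_csSup ⟨#H.toFinset, ?_⟩ ⟨M, hM, rfl⟩
  rintro k ⟨M', hM', rfl⟩
  exact card_le_card fun e he => Multiset.mem_toFinset.2 (hM'.1 e he)

variable [DecidableEq α] [DecidableEq β] [DecidableEq γ]

theorem IsTrimatching.card_le_matchNum {σ : Finset H}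
    (hσ : IsTrimatching (fun i => i.1.1) (fun i => i.1.2.1) (fun i => i.1.2.2) σ) :
    #σ ≤ matchNum H := by
  have hinj : Set.InjOn (fun i : H => i.1) σ := fun i hi j hj h =>
    hσ.1 hi hj (congrArg Prod.fst h)
  rw [← card_image_of_injOn hinj]
  refine IsMatching.card_le_matchNum ⟨fun e he => ?_, fun e he f hf hne => ?_⟩
  · obtain ⟨i, -, rfl⟩ := mem_image.1 he
    exact Multiset.coe_mem
  · obtain ⟨i, hi, rfl⟩ := mem_image.1 he
    obtain ⟨j, hj, rfl⟩ := mem_image.1 hf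
    have hij : i ≠ j := fun h => hne (h ▸ rfl)
    exact ⟨hσ.1.ne hi hj hij, hσ.2.1.ne hi hj hij, hσ.2.2.ne hi hj hij⟩

theorem degreeLE_coe (hdB : ∀ b, deg2 H b ≤ r) (hdC : ∀ c, deg3 H c ≤ r) (E : Finset H) :
    DegreeLE (fun i => i.1.2.1) (fun i => i.1.2.2) r E := by
  refine DegreeLE.mono (G := univ) ⟨fun b => ?_, fun c => ?_⟩ (subset_univ E)
  · exact (card_filter_coe H fun e => e.2.1 = b).trans_le (hdB b)
  · exact (card_filter_coe H fun e => e.2.2 = c).trans_le (hdC c)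

theorem FanoAt.isFanoCopy {G : Finset H} {u v : α} {y y' : β} {z z' : γ}
    (h : FanoAt (fun i => i.1.1) (fun i => i.1.2.1) (fun i => i.1.2.2) r G u v y y' z z')
    (hs : 2 * s = r) : IsFanoCopy H s u v y y' z z' := by
  refine ⟨h.label_ne, h.full.left_ne, h.full.right_ne, Multiset.le_iff_count.2 fun e => ?_⟩
  have hnodup : (fanoEdges u v y y' z z').Nodup := by
    simp [fanoEdges, h.label_ne, h.full.left_ne, h.full.right_ne]
  rw [Multiset.count_nsmul]
  by_cases he : e ∈ fanoEdges u v y y' z z'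
  · rw [Multiset.count_eq_one_of_mem hnodup he, mul_one]
    calc s = #{i ∈ G | i.1 = e} := by
          have hcard : 2 * #{i ∈ G | i.1 = e} = r := h.card_eq e he
          lia
      _ ≤ #{i : H | i.1 = e} := card_le_card (filter_subset_filter _ (subset_univ G))
      _ = H.count e := by
          rw [card_filter_coe H (· = e), Multiset.count_eq_card_filter_eq]
          simp only [eq_comm]
  · simp [Multiset.count_eq_zero_of_notMem he]

theorem FanoAt.exists_isFanoCopy {G : Finset H} {u v : α} {y y' : β} {z z' : γ}
    (h : FanoAt (fun i => i.1.1) (fun i => i.1.2.1) (fun i => i.1.2.2) r G u v y y' z z') :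
    ∃ s, 2 * s = r ∧ IsFanoCopy H s u v y y' z z' :=
  have hs := h.card_eq (u, y, z) (by simp [mem_fanoEdges])
  ⟨_, hs, h.isFanoCopy hs⟩

end Transfer

theorem stmt3_general {α β γ : Type*} [Fintype α] [DecidableEq α] [DecidableEq β] [DecidableEq γ]
    (H : Multiset (α × β × γ)) (n r : ℕ) (hr : 2 ≤ r) (ε : ℝ) (hA : Fintype.card α = n)
    (hdA : ∀ a : α, r ≤ deg1 H a) (hdB : ∀ b : β, deg2 H b ≤ r) (hdC : ∀ c : γ, deg3 H c ≤ r)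
    (hnu : (matchNum H : ℝ) ≤ (1 + ε) * n / 2) :
    ∃ T : Finset (α × α × β × β × γ × γ),
      (∀ t ∈ T, ∃ s : ℕ, 2 * s = r ∧
        IsFanoCopy H s t.1 t.2.1 t.2.2.1 t.2.2.2.1 t.2.2.2.2.1 t.2.2.2.2.2) ∧
      (∀ t ∈ T, ∀ t' ∈ T, t ≠ t' →
        ({t.1, t.2.1} : Finset α) ∩ {t'.1, t'.2.1} = ∅ ∧
        ({t.2.2.1, t.2.2.2.1} : Finset β) ∩ {t'.2.2.1, t'.2.2.2.1} = ∅ ∧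
        ({t.2.2.2.2.1, t.2.2.2.2.2} : Finset γ) ∩ {t'.2.2.2.2.1, t'.2.2.2.2.2} = ∅) ∧
      (1 - 14 * (r : ℝ) ^ 2 * ε) * n / 2 ≤ (T.card : ℝ) := by
  classical
  subst hA
  obtain ⟨E, hE⟩ := exists_label_trimming (o := fun i : H => i.1.1) (r := r) fun a =>
    (hdA a).trans_eq (card_filter_coe H fun e => e.1 = a).symm
  obtain ⟨G, T, hT, hcard⟩ := exists_isFanoFamily hr hE (degreeLE_coe hdB hdC E)
    fun σ _ hσ => hσ.card_le_matchNum
  refine ⟨T, fun t ht => (hT.fanoAt t ht).exists_isFanoCopy, ?_, ?_⟩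
  · simpa only [disjoint_iff_inter_eq_empty] using hT.disjoint
  · have hdeficit : 14 * (r : ℝ) ^ 2 * (2 * matchNum H - Fintype.card α) ≤
        14 * r ^ 2 * (ε * Fintype.card α) := by gcongr; linarith
    have hcard' : (Fintype.card α : ℝ) ≤
        2 * #T + 14 * r ^ 2 * (2 * matchNum H - Fintype.card α) := by exact_mod_cast hcard
    linarith

/-- Stability theorem under the weaker degree condition: if every vertex of the class `α`
(of size `n`) has degree at least `r ≥ 2`, every vertex of the other two classes has degree
at most `r`, and `ν(H) ≤ (1 + ε)·n/2`, then `H` contains at least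
`(1 − (72r² − 150r + 77)ε)·n/2` pairwise (vertex-)disjoint copies of `(r/2) • F`. -/
theorem stmt3 {α β γ : Type*} [Fintype α]
    [DecidableEq α] [DecidableEq β] [DecidableEq γ]
    (H : Multiset (α × β × γ)) (n r : ℕ) (hr : 2 ≤ r) (ε : ℝ) (hε : 0 ≤ ε)
    (hA : Fintype.card α = n)
    (hdA : ∀ a : α, r ≤ deg1 H a)
    (hdB : ∀ b : β, deg2 H b ≤ r)
    (hdC : ∀ c : γ, deg3 H c ≤ r)
    (hnu : (matchNum H : ℝ) ≤ (1 + ε) * n / 2) :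
    ∃ T : Finset (α × α × β × β × γ × γ),
      (∀ t ∈ T, ∃ s : ℕ, 2 * s = r ∧
        IsFanoCopy H s t.1 t.2.1 t.2.2.1 t.2.2.2.1 t.2.2.2.2.1 t.2.2.2.2.2) ∧
      (∀ t ∈ T, ∀ t' ∈ T, t ≠ t' →
        ({t.1, t.2.1} : Finset α) ∩ {t'.1, t'.2.1} = ∅ ∧
        ({t.2.2.1, t.2.2.2.1} : Finset β) ∩ {t'.2.2.1, t'.2.2.2.1} = ∅ ∧
        ({t.2.2.2.2.1, t.2.2.2.2.2} : Finset γ) ∩ {t'.2.2.2.2.1, t'.2.2.2.2.2} = ∅) ∧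
      (1 - (72 * (r : ℝ) ^ 2 - 150 * r + 77) * ε) * n / 2 ≤ (T.card : ℝ) := by
  obtain ⟨T, hfano, hdisj, hcard⟩ := stmt3_general H n r hr ε hA hdA hdB hdC hnu
  refine ⟨T, hfano, hdisj, le_trans ?_ hcard⟩
  gcongr
  have hr' : (2 : ℝ) ≤ r := by exact_mod_cast hr
  nlinarith

end Tripartite
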